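/- arXiv:1406.4679 — 2 statements merged into one kernel-verified Lean document; each statement's English description precedes it below -/
import Mathlib

section
/- For every integer k ≥ 2 there exist a constant ε > 0 and positive integers n_0, m_0 such that for all n ≥ n_0 and m ≥ m_0 there exist binary relational structures A_n and B_m over a common vocabulary with |V(A_n)| = n and |V(B_m)| = m such that a CSP-refutation of (A_n, B_m) of width at most k−1 exists and depth^k(A_n, B_m) ≥ ε · n^(k−1) · m^(k−1). -/
/-- A relational structure over the vocabulary `ι` (a type of relation symbols)
with universe `V`: each relation symbol is interpreted as a set of tuples
(lists) over `V`. -/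
structure RelStruct (ι V : Type) where
  rel : ι → List V → Prop

namespace CSP

variable {ι α β : Type}

/-- A finite set of pairs is a partial map if it is functional. -/
def Functional (p : Finset (α × β)) : Prop :=
  ∀ ⦃x : α⦄ ⦃y y' : β⦄, (x, y) ∈ p → (x, y') ∈ p → y = y'

/-- `p` is a partial homomorphism from `A` to `B`: it is a partial map, and every
tuple of elements of its domain that belongs to a relation of `A` is mapped
coordinatewise to a tuple of the corresponding relation of `B`. -/
def PartialHom (A : RelStruct ι α) (B : RelStruct ι β) (p : Finset (α × β)) : Prop :=
  Functional p ∧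
  ∀ (R : ι) (t : List α) (t' : List β),
    List.Forall₂ (fun x y => (x, y) ∈ p) t t' → A.rel R t → B.rel R t'

/-- A structure is binary if all of its relations consist of tuples of arity at most 2. -/
def Binary (A : RelStruct ι α) : Prop := ∀ R t, A.rel R t → t.length ≤ 2

/-- `Deriv A B w p d` holds iff the partial map `p` has a CSP-derivation of width at
most `w` and depth at most `d`: axioms are the partial maps that are not partial
homomorphisms (of any depth), and a non-axiom line `p` with `|p| ≤ w` may be derived
from the premises `p'_b ∪ {x ↦ b}` (for all `b ∈ V(B)`), where each `p'_b ⊆ p`,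
increasing the depth by one. -/
inductive Deriv [DecidableEq α] [DecidableEq β]
    (A : RelStruct ι α) (B : RelStruct ι β) (w : ℕ) :
    Finset (α × β) → ℕ → Prop
  | ax {p : Finset (α × β)} {d : ℕ} :
      Functional p → ¬ PartialHom A B p → Deriv A B w p d
  | rule {p : Finset (α × β)} {d : ℕ} (x : α) (prem : β → Finset (α × β)) :
      Functional p → p.card ≤ w →
      (∀ b : β, prem b ⊆ p) →
      (∀ b : β, Deriv A B w (insert (x, b) (prem b)) d) →
      Deriv A B w p (d + 1)

end CSP

/-!
The hard instances simulate a counter with `r = k - 1` digits in base `N * M + 1`. Each entry of the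
counter is split between a variable and its value: one of `2 * N` variables per digit determines the
entry modulo `2 * N`, and one of `M` values determines the rest. A position of `r` nodes that
displays the whole counter forces the outcome of exactly the query that advances it. If some digit
is not displayed, Duplicator may answer with a blank and gives nothing away, so within width `r` the
refutation has to set the counter to zero, starting from `r` freely guessed values, and then run
through its configurations one after the other. An increment is forced only if the lower digits are
displayed as maximal first and as zero later; since they are replaced one at a time, a digit is
marked before a carry reaches it. The rank of a configuration rises by at most one with each query,
which gives the lower bound.
-/

/-- The structure `A` with its universe renamed along the bijection `e`. -/
def RelStruct.relabel {ι V W : Type} (A : RelStruct ι V) (e : V ≃ W) : RelStruct ι W where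
  rel R t := A.rel R (t.map e.symm)

@[simp]
theorem RelStruct.relabel_relabel_symm {ι V W : Type} (A : RelStruct ι V) (e : V ≃ W) :
    (A.relabel e).relabel e.symm = A := by
  simp [relabel]

namespace CSP

/-! ### Partial maps and derivations -/

section General

variable {ι α β α' β' : Type} {A : RelStruct ι α} {B : RelStruct ι β} {p q : Finset (α × β)}
  {w d : ℕ}

theorem Functional.mono (hp : Functional p) (hqp : q ⊆ p) : Functional q :=
  fun _ _ _ h h' => hp (hqp h) (hqp h')

theorem PartialHom.mono (hp : PartialHom A B p) (hqp : q ⊆ p) : PartialHom A B q :=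
  ⟨hp.1.mono hqp, fun R _ _ h => hp.2 R _ _ (h.imp fun _ _ h' => hqp h')⟩

theorem Binary.relabel (hA : Binary A) (e : α ≃ α') : Binary (A.relabel e) :=
  fun R t ht => by simpa using hA R _ ht

theorem Functional.map_prodCongr (hp : Functional p) (ea : α ≃ α') (eb : β ≃ β') :
    Functional (p.map (ea.prodCongr eb).toEmbedding) := by
  intro x y y' h h'
  rw [Finset.mem_map_equiv] at h h'
  exact eb.symm.injective (hp h h')

theorem PartialHom.of_map_prodCongr {ea : α ≃ α'} {eb : β ≃ β'}
    (h : PartialHom (A.relabel ea) (B.relabel eb) (p.map (ea.prodCongr eb).toEmbedding)) :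
    PartialHom A B p := by
  have mem_map {x y} (hxy : (x, y) ∈ p) :
      (ea x, eb y) ∈ p.map (ea.prodCongr eb).toEmbedding :=
    Finset.mem_map_of_mem (ea.prodCongr eb).toEmbedding hxy
  refine ⟨fun x y y' hy hy' => eb.injective (h.1 (mem_map hy) (mem_map hy')),
    fun R t t' htt' ht => ?_⟩
  have hmap := h.2 R (t.map ea) (t'.map eb)
    (List.forall₂_map_left_iff.2 (List.forall₂_map_right_iff.2 (htt'.imp fun _ _ => mem_map)))
  simpa [RelStruct.relabel, ht] using hmap

variable [DecidableEq α] [DecidableEq β] [DecidableEq α'] [DecidableEq β']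

theorem Functional.insert (hp : Functional p) {x : α} (hx : ∀ u ∈ p, u.1 ≠ x) (b : β) :
    Functional (insert (x, b) p) := by
  intro y a a' h h'
  simp only [Finset.mem_insert, Prod.mk.injEq] at h h'
  rcases h with ⟨rfl, rfl⟩ | h <;> rcases h' with ⟨hy, rfl⟩ | h'
  · rfl
  · exact absurd rfl (hx _ h')
  · exact absurd hy (hx _ h)
  · exact hp h h'

theorem Deriv.mono {d' : ℕ} (h : Deriv A B w p d) (hd : d ≤ d') : Deriv A B w p d' := by
  induction h generalizing d' with
  | ax hp hhom => exact .ax hp hhom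
  | rule x prem hp hw hprem _ ih =>
    obtain ⟨e, rfl⟩ := Nat.exists_eq_add_of_lt hd
    exact .rule x prem hp hw hprem fun b => ih b (by omega)

theorem Deriv.relabel (h : Deriv A B w p d) (ea : α ≃ α') (eb : β ≃ β') :
    Deriv (A.relabel ea) (B.relabel eb) w (p.map (ea.prodCongr eb).toEmbedding) d := by
  induction h with
  | ax hp hhom => exact .ax (hp.map_prodCongr ea eb) fun h => hhom h.of_map_prodCongr
  | rule x prem hp hw hprem _ ih =>
    refine .rule (ea x) (fun b => (prem (eb.symm b)).map (ea.prodCongr eb).toEmbedding)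
      (hp.map_prodCongr ea eb) (by rwa [Finset.card_map])
      (fun b => Finset.map_subset_map.2 (hprem _)) fun b => ?_
    simpa [Finset.map_insert] using ih (eb.symm b)

theorem deriv_relabel_empty_iff (ea : α ≃ α') (eb : β ≃ β') :
    Deriv (A.relabel ea) (B.relabel eb) w ∅ d ↔ Deriv A B w ∅ d :=
  ⟨fun h => by simpa using h.relabel ea.symm eb.symm, fun h => by simpa using h.relabel ea eb⟩

/-- Duplicator's side of the existential pebble game: a family `P d` of partial homomorphisms on
which Duplicator survives `d` further queries rules out derivations of depth `d`. -/
theorem not_deriv_of_strategy {P : ℕ → Finset (α × β) → Prop}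
    (partialHom : ∀ {d p}, P d p → PartialHom A B p)
    (mono : ∀ {d p q}, P d p → q ⊆ p → P d q)
    (extend : ∀ {d p}, P (d + 1) p → p.card ≤ w → ∀ x, ∃ b, P d (insert (x, b) p))
    (hp : P d p) : ¬ Deriv A B w p d := by
  intro h
  induction h with
  | ax _ hhom => exact hhom (partialHom hp)
  | rule x prem _ hw hprem _ ih =>
    obtain ⟨b, hb⟩ := extend hp hw x
    exact ih b (mono hb (Finset.insert_subset_insert _ (hprem b)))

/-- `p` has a CSP-derivation of width at most `w`, of whatever depth. -/
def Derivable (A : RelStruct ι α) (B : RelStruct ι β) (w : ℕ) (p : Finset (α × β)) : Prop :=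
  ∃ d, Deriv A B w p d

theorem Derivable.of_query [Finite β] (hp : Functional p) (hw : p.card ≤ w) {x : α}
    (hx : ∀ u ∈ p, u.1 ≠ x)
    (h : ∀ b, PartialHom A B (Insert.insert (x, b) p) →
      ∃ q ⊆ p, Derivable A B w (Insert.insert (x, b) q)) :
    Derivable A B w p := by
  have premise (b : β) : ∃ q ⊆ p, Derivable A B w (Insert.insert (x, b) q) := by
    by_cases hb : PartialHom A B (Insert.insert (x, b) p)
    · exact h b hb
    · exact ⟨p, subset_rfl, 0, .ax (hp.insert hx b) hb⟩
  choose prem hprem depth hdepth using premise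
  have := Fintype.ofFinite β
  exact ⟨Finset.univ.sup depth + 1, .rule x prem hp hw hprem fun b =>
    (hdepth b).mono (Finset.le_sup (Finset.mem_univ b))⟩

theorem derivable_empty_of_forall_graph [Finite β] [Nonempty β] (s : Finset α)
    (hs : s.card ≤ w + 1) (h : ∀ g : α → β, Derivable A B w (s.image fun x => (x, g x))) :
    Derivable A B w ∅ := by
  induction s using Finset.induction_on with
  | empty => simpa using h fun _ => Classical.arbitrary β
  | insert x s hxs ih =>
    rw [Finset.card_insert_of_notMem hxs] at hs
    refine ih (by omega) fun g => Derivable.of_query ?_ (Finset.card_image_le.trans (by omega))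
      (x := x) (by simpa using fun y hy (hyx : y = x) => hxs (hyx ▸ hy))
      fun b _ => ⟨_, subset_rfl, ?_⟩
    · simp +contextual [Functional]
    · have graph_update : s.image (fun y => (y, Function.update g x b y)) =
          s.image fun y => (y, g y) :=
        Finset.image_congr fun y hy => by
          simp [Function.update_of_ne (ne_of_mem_of_not_mem hy hxs)]
      simpa [Finset.image_insert, graph_update] using h (Function.update g x b)

end General

/-! ### Structures given by a conflict relation -/

section Conflict

variable {α β : Type} {conf : α × β → α × β → Prop} {p : Finset (α × β)}

/-- The source of the constraint network of a conflict relation on `α × β`. There is one relation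
symbol for each pair of variables, and it holds of that pair only. -/
def conflictSource (α : Type) : RelStruct (α × α) α where
  rel R t := t = [R.1, R.2]

/-- The target of the constraint network of the conflict relation `conf`: the relation of a pair
of variables collects the pairs of values for them that do not conflict. -/
def conflictTarget (conf : α × β → α × β → Prop) : RelStruct (α × α) β where
  rel R t := ∃ a b, t = [a, b] ∧ ¬ conf (R.1, a) (R.2, b)

theorem binary_conflictSource : Binary (conflictSource α) := by
  rintro R t (rfl : t = _)
  simp

theorem binary_conflictTarget : Binary (conflictTarget conf) := by
  rintro R t ⟨a, b, rfl, _⟩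
  simp

theorem partialHom_conflict_iff :
    PartialHom (conflictSource α) (conflictTarget conf) p ↔
      Functional p ∧ ∀ u ∈ p, ∀ v ∈ p, ¬ conf u v := by
  refine and_congr_right fun _ => ⟨?_, ?_⟩
  · rintro h ⟨x, a⟩ hu ⟨y, b⟩ hv hc
    obtain ⟨a', b', hab, hc'⟩ := h (x, y) [x, y] [a, b] (by simp [hu, hv]) rfl
    simp only [List.cons.injEq, and_true] at hab
    obtain ⟨rfl, rfl⟩ := hab
    exact hc' hc
  · rintro h ⟨x, y⟩ t t' htt' (rfl : t = [x, y])
    obtain ⟨a, _, hx, hrest, rfl⟩ := List.forall₂_cons_left_iff.1 htt'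
    obtain ⟨b, _, hy, hnil, rfl⟩ := List.forall₂_cons_left_iff.1 hrest
    obtain rfl := List.forall₂_nil_left_iff.1 hnil
    exact ⟨a, b, rfl, h _ hx _ hy⟩

theorem PartialHom.insert_conflict [DecidableEq α] [DecidableEq β]
    (hp : PartialHom (conflictSource α) (conflictTarget conf) p) {x : α} {b : β}
    (hx : ∀ u ∈ p, u.1 ≠ x) (hself : ¬ conf (x, b) (x, b))
    (hto : ∀ u ∈ p, ¬ conf u (x, b)) (hfrom : ∀ v ∈ p, ¬ conf (x, b) v) :
    PartialHom (conflictSource α) (conflictTarget conf) (insert (x, b) p) := by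
  rw [partialHom_conflict_iff] at hp ⊢
  refine ⟨hp.1.insert hx b, ?_⟩
  simp only [Finset.forall_mem_insert]
  exact ⟨⟨hself, hfrom⟩, fun u hu => ⟨hto u hu, hp.2 u hu⟩⟩

end Conflict

/-! ### The counter -/

section Counter

variable {B K i n r : ℕ} {t t' : ℕ → ℕ}

/-- The rank of a configuration `t` of a counter with `i` digits in base `B`. The entry `t j`
encodes the digit `t j / 2` at place `j`, which carries a mark if `t j` is odd. A mark announces a
pending carry: the lower digits are on their way from their maximum to zero, and are counted as
maximal. The rank exceeds the counted number by one, so it runs from `1` to `B ^ i`. -/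
def rank (B : ℕ) (t : ℕ → ℕ) : ℕ → ℕ
  | 0 => 1
  | i + 1 => t i / 2 * B ^ i + if Even (t i) then rank B t i else B ^ i

theorem rank_of_forall_eq_zero (ht : ∀ j < i, t j = 0) : rank B t i = 1 := by
  induction i with
  | zero => rfl
  | succ i ih => simp [rank, ht i i.lt_succ_self, ih fun j hj => ht j (by omega)]

theorem rank_of_forall_eq_top (ht : ∀ j < i, t j = 2 * K) : rank (K + 1) t i = (K + 1) ^ i := by
  induction i with
  | zero => rfl
  | succ i ih =>
    rw [rank, ht i i.lt_succ_self, ih fun j hj => ht j (by omega), if_pos (even_two_mul K),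
      Nat.mul_div_cancel_left K two_pos]
    ring

theorem rank_le (ht : ∀ j < i, t j ≤ 2 * K) : rank (K + 1) t i ≤ (K + 1) ^ i := by
  induction i with
  | zero => rfl
  | succ i ih =>
    have hlow : rank (K + 1) t i ≤ (K + 1) ^ i := ih fun j hj => ht j (by omega)
    have hdigit : t i / 2 ≤ K := by have := ht i i.lt_succ_self; omega
    calc rank (K + 1) t (i + 1) ≤ t i / 2 * (K + 1) ^ i + (K + 1) ^ i := by
          rw [rank]; split_ifs <;> omega
      _ ≤ K * (K + 1) ^ i + (K + 1) ^ i := by gcongr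
      _ = (K + 1) ^ (i + 1) := by ring

theorem rank_le_rank_of_eq_zero_or_eq (ht : ∀ j < i, t j ≤ 2 * K)
    (htt' : ∀ j < i, t' j = 0 ∨ t' j = t j) : rank (K + 1) t' i ≤ rank (K + 1) t i := by
  induction i with
  | zero => rfl
  | succ i ih =>
    have hlow := ih (fun j hj => ht j (by omega)) fun j hj => htt' j (by omega)
    have hbound : rank (K + 1) t i ≤ (K + 1) ^ i := rank_le fun j hj => ht j (by omega)
    rcases htt' i i.lt_succ_self with h | h
    · simp only [rank, h, Even.zero, if_true]
      split_ifs <;> omega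
    · simp only [rank, h]
      split_ifs <;> omega

theorem rank_update_succ_le (hi : i < n)
    (hlow : ∀ j < i, t j = if Even (t i) then 2 * K else 0) :
    rank (K + 1) (Function.update t i (t i + 1)) n ≤ rank (K + 1) t n + 1 := by
  induction n, hi using Nat.le_induction with
  | base =>
    by_cases heven : Even (t i)
    · have hrank : rank (K + 1) t i = (K + 1) ^ i :=
        rank_of_forall_eq_top fun j hj => by rw [hlow j hj, if_pos heven]
      have hhalf : (t i + 1) / 2 = t i / 2 := by obtain ⟨m, hm⟩ := heven; omega
      simp [rank, heven, hrank, hhalf, Nat.even_add_one]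
    · have hrank : rank (K + 1) (Function.update t i (t i + 1)) i = 1 :=
        rank_of_forall_eq_zero fun j hj => by
          rw [Function.update_of_ne hj.ne, hlow j hj, if_neg heven]
      have hhalf : (t i + 1) / 2 = t i / 2 + 1 := by
        obtain ⟨m, hm⟩ := Nat.not_even_iff_odd.1 heven; omega
      simp [rank, heven, hrank, hhalf, Nat.even_add_one, Nat.add_mul]
  | succ n hin ih =>
    simp only [rank, Function.update_of_ne (show n ≠ i by omega)]
    split_ifs <;> omega

/-- One step of the counter with `r` digits in base `K + 1`, in the encoding of `rank`. An unmarked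
digit above maximal ones receives a mark, a marked digit above zeros is incremented and loses it,
and maximal digits may be reset to zero. -/
inductive CounterStep (K r : ℕ) : (ℕ → ℕ) → (ℕ → ℕ) → Prop
  | advance {t : ℕ → ℕ} (i : Fin r) (hi : t i < 2 * K)
      (hlow : ∀ j < i.1, t j = if Even (t i) then 2 * K else 0) :
      CounterStep K r t (Function.update t i (t i + 1))
  | reset {t : ℕ → ℕ} (i : Fin r) (hi : t i = 2 * K) :
      CounterStep K r t (Function.update t i 0)

/-- The configuration `t` with the entries below `i` replaced by `e`. -/
def fillBelow (i e : ℕ) (t : ℕ → ℕ) : ℕ → ℕ := fun j => if j < i then e else t j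

@[simp]
theorem fillBelow_zero (e : ℕ) (t : ℕ → ℕ) : fillBelow 0 e t = t :=
  funext fun j => if_neg j.not_lt_zero

theorem fillBelow_apply_of_lt {j : ℕ} (h : j < i) (e : ℕ) (t : ℕ → ℕ) : fillBelow i e t j = e :=
  if_pos h

theorem fillBelow_apply_of_le {j : ℕ} (h : i ≤ j) (e : ℕ) (t : ℕ → ℕ) :
    fillBelow i e t j = t j :=
  if_neg h.not_gt

theorem fillBelow_fillBelow (i e e' : ℕ) (t : ℕ → ℕ) :
    fillBelow i e (fillBelow i e' t) = fillBelow i e t := by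
  ext j
  by_cases hj : j < i <;> simp [fillBelow, hj]

theorem fillBelow_update (i e a : ℕ) (t : ℕ → ℕ) :
    fillBelow i e (Function.update t i a) = Function.update (fillBelow i e t) i a := by
  ext j
  rcases lt_trichotomy j i with hj | rfl | hj
  · simp [fillBelow, hj, hj.ne]
  · simp [fillBelow]
  · simp [fillBelow, hj.ne', hj.not_gt]

theorem fillBelow_succ (i e : ℕ) (t : ℕ → ℕ) :
    fillBelow (i + 1) e t = Function.update (fillBelow i e t) i e := by
  ext j
  rcases lt_trichotomy j i with hj | rfl | hj
  · simp [fillBelow, hj, hj.ne, hj.trans i.lt_succ_self]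
  · simp [fillBelow]
  · simp [fillBelow, hj.ne', hj.not_gt, show ¬ j < i + 1 by omega]

open Relation (ReflTransGen)

theorem reflTransGen_counterStep_fillBelow_zero (hi : i ≤ r) (ht : ∀ j < i, t j = 2 * K) :
    ReflTransGen (CounterStep K r) t (fillBelow i 0 t) := by
  induction i with
  | zero => rw [fillBelow_zero]
  | succ i ih =>
    rw [fillBelow_succ]
    refine (ih (by omega) fun j hj => ht j (by omega)).tail (.reset ⟨i, hi⟩ ?_)
    rw [fillBelow_apply_of_le le_rfl, ht i i.lt_succ_self]

theorem reflTransGen_counterStep_fillBelow_top (hi : i ≤ r) (t : ℕ → ℕ) :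
    ReflTransGen (CounterStep K r) (fillBelow i 0 t) (fillBelow i (2 * K) t) := by
  induction i generalizing t with
  | zero => simp [ReflTransGen.refl]
  | succ i ih =>
    have advance (e : ℕ) (he : e < 2 * K) :
        CounterStep K r (fillBelow i (if Even e then 2 * K else 0) (Function.update t i e))
          (fillBelow i (if Even e then 2 * K else 0) (Function.update t i (e + 1))) := by
      have hstep := CounterStep.advance (K := K) (r := r) ⟨i, hi⟩
        (t := fillBelow i (if Even e then 2 * K else 0) (Function.update t i e))
      simp only [fillBelow_apply_of_le le_rfl, Function.update_self] at hstep
      simpa only [← fillBelow_update, Function.update_idem] using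
        hstep he fun j hj => fillBelow_apply_of_lt hj _ _
    have cycle (m : ℕ) (hm : m < K) :
        ReflTransGen (CounterStep K r) (fillBelow i 0 (Function.update t i (2 * m)))
          (fillBelow i 0 (Function.update t i (2 * (m + 1)))) := by
      have hreset := reflTransGen_counterStep_fillBelow_zero (K := K) (r := r) (i := i)
        (t := fillBelow i (2 * K) (Function.update t i (2 * m + 1))) (by omega)
        fun j hj => fillBelow_apply_of_lt hj _ _
      rw [fillBelow_fillBelow] at hreset
      have hmark := advance (2 * m) (by omega)
      have hcarry := advance (2 * m + 1) (by omega)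
      simp only [even_two_mul, if_true, Nat.even_add_one, not_true, if_false] at hmark hcarry
      exact (((ih (by omega) _).tail hmark).trans hreset).tail hcarry
    have count (m : ℕ) (hm : m ≤ K) :
        ReflTransGen (CounterStep K r) (fillBelow i 0 (Function.update t i 0))
          (fillBelow i 0 (Function.update t i (2 * m))) := by
      induction m with
      | zero => exact .refl
      | succ m ihm => exact (ihm (by omega)).trans (cycle m hm)
    simpa only [fillBelow_update, ← fillBelow_succ] using
      (count K le_rfl).trans (ih (by omega) _)

end Counter

/-! ### The constraint network of a counter -/

/-- The variables of the counter network, for `r` digits in base `N * M + 1`. The values of the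
variables `guess j`, one for each group `j`, are free. The variable `reset s l` sets digit `l` to
zero, either at the start, when the guesses have the codes `s` (`some j` for the blank `j` and
`none` for a number), or in the course of a carry. The variable `advance i c` moves digit `i` one
step, to an entry of residue class `c`. The variables `final d` are contradictory once all digits
are maximal; one of them would do, and `D` of them adjust the number of variables. -/
inductive CounterVar (r N D : ℕ) where
  | guess (j : Fin r)
  | reset (s : Fin r → Option (Fin r)) (l : Fin r)
  | advance (i : Fin r) (c : Fin (2 * N))
  | final (d : Fin D)
  deriving DecidableEq

/-- The values of the counter network. A number `Sum.inl a` supplies the part of a digit that is not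
determined by the variable. A blank `Sum.inr j` is the evasive answer that conflicts only with
nodes of group `j`. -/
abbrev CounterVal (r M : ℕ) : Type := Fin M ⊕ Fin r

/-- An assignment of a value to a variable of the counter network. -/
abbrev CounterNode (r N M D : ℕ) : Type := CounterVar r N D × CounterVal r M

section Network

variable {r N M D : ℕ}

/-- The variables of the counter network as a disjoint union, which gives their number. -/
def CounterVar.equivSum : CounterVar r N D ≃
    Fin r ⊕ (Fin r → Option (Fin r)) × Fin r ⊕ Fin r × Fin (2 * N) ⊕ Fin D where
  toFun
    | guess j => .inl j
    | reset s l => .inr (.inl (s, l))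
    | advance i c => .inr (.inr (.inl (i, c)))
    | final d => .inr (.inr (.inr d))
  invFun
    | .inl j => guess j
    | .inr (.inl (s, l)) => reset s l
    | .inr (.inr (.inl (i, c))) => advance i c
    | .inr (.inr (.inr d)) => final d
  left_inv x := by cases x <;> rfl
  right_inv := by rintro (_ | _ | _ | _) <;> rfl

instance : Fintype (CounterVar r N D) := .ofEquiv _ CounterVar.equivSum.symm

theorem card_counterVar :
    Fintype.card (CounterVar r N D) = r + (r + 1) ^ r * r + r * (2 * N) + D := by
  simp [Fintype.card_congr CounterVar.equivSum, add_assoc]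

/-- The entry, in the encoding of `rank`, that the number `a` stands for at a variable of class
`c`. These are the entries from `1` to `2 * (N * M)`. -/
def digit (c : Fin (2 * N)) (a : Fin M) : ℕ := 1 + a * (2 * N) + c

theorem digit_le (c : Fin (2 * N)) (a : Fin M) : digit c a ≤ 2 * (N * M) :=
  calc digit c a ≤ (a + 1) * (2 * N) := by have := c.2; rw [digit]; linarith
    _ ≤ M * (2 * N) := Nat.mul_le_mul_right _ a.2
    _ = 2 * (N * M) := by ring

theorem exists_digit_eq_succ {e : ℕ} (he : e < 2 * (N * M)) :
    ∃ (c : Fin (2 * N)) (a : Fin M), digit c a = e + 1 := by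
  have he' : e < M * (2 * N) := by linarith
  have hN : 0 < 2 * N := Nat.pos_of_mul_pos_left (Nat.zero_lt_of_lt he')
  refine ⟨⟨e % (2 * N), Nat.mod_lt _ hN⟩, ⟨e / (2 * N), Nat.div_lt_of_lt_mul (by linarith)⟩, ?_⟩
  have := Nat.div_add_mod' e (2 * N)
  simp only [digit]
  omega

theorem digit_modEq (c : Fin (2 * N)) (a a' : Fin M) : digit c a ≡ digit c a' [MOD 2 * N] := by
  simp [digit, Nat.ModEq, Nat.add_mod]

theorem even_iff_of_digit_eq_succ {c : Fin (2 * N)} {a : Fin M} {e : ℕ} (h : digit c a = e + 1) :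
    Even (c : ℕ) ↔ Even e := by
  obtain rfl : e = a * (2 * N) + c := by rw [digit] at h; omega
  simp [parity_simps]

theorem not_modEq_succ_self (e : ℕ) : ¬ e ≡ e + 1 [MOD 2 * N] := fun h => by
  have : e ≡ e + 1 [MOD 2] := h.of_mul_right N
  simp only [Nat.ModEq] at this
  omega

/-- The group and the entry of the digit that a node displays, if any. -/
def readDigit : CounterNode r N M D → Option (Fin r × ℕ)
  | (.reset _ l, .inl _) => some (l, 0)
  | (.advance i c, .inl a) => some (i, digit c a)
  | _ => none

/-- The variable `x` has to receive a value other than the blank `j` in the presence of a node that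
licenses `x` in group `j`. Only when all groups are licensed is Duplicator forced to answer `x` with
a number. -/
def Licenses (x : CounterVar r N D) (j : Fin r) (u : CounterNode r N M D) : Prop :=
  match x with
  | .guess _ => False
  | .reset s l => (u.1 = .guess j ∧ u.2.getRight? = s j) ∨
      ∃ e, readDigit u = some (j, e) ∧ (j = l → e = 2 * (N * M))
  | .advance i c => ∃ e, readDigit u = some (j, e) ∧
      (j < i → e = if Even (c : ℕ) then 2 * (N * M) else 0) ∧
      (j = i → ∃ a : Fin M, digit c a = e + 1)
  | .final _ => readDigit u = some (j, 2 * (N * M))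

/-- The conflict relation of the counter network. Apart from the rule for blanks and the absence of
numbers at `final d`, a node displaying `e` in group `i` enforces the correct number for the entry
`e + 1` at the variables `advance i c` of its class. -/
def Conflict (u v : CounterNode r N M D) : Prop :=
  match v with
  | (x, .inr j) => Licenses x j u
  | (.final _, .inl _) => True
  | (.advance i c, .inl a) => ∃ e, readDigit u = some (i, e) ∧
      (∃ a' : Fin M, digit c a' = e + 1) ∧ digit c a ≠ e + 1
  | _ => False

/-- The source of the counter network. -/
abbrev counterSource (r N D : ℕ) :
    RelStruct (CounterVar r N D × CounterVar r N D) (CounterVar r N D) :=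
  conflictSource _

/-- The target of the counter network. -/
abbrev counterTarget (r N M D : ℕ) :
    RelStruct (CounterVar r N D × CounterVar r N D) (CounterVal r M) :=
  conflictTarget Conflict

/-- The digit group that a variable belongs to. -/
def CounterVar.group : CounterVar r N D → Option (Fin r)
  | .guess j => some j
  | .reset _ l => some l
  | .advance i _ => some i
  | .final _ => none

variable {x : CounterVar r N D} {u v : CounterNode r N M D} {i j : Fin r} {e e' : ℕ}

theorem group_of_readDigit (h : readDigit u = some (j, e)) : u.1.group = some j := by
  obtain ⟨x, b⟩ := u
  cases x <;> cases b <;> simp_all [readDigit, CounterVar.group]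

theorem readDigit_le (h : readDigit u = some (j, e)) : e ≤ 2 * (N * M) := by
  obtain ⟨x, b⟩ := u
  cases x <;> cases b <;> simp only [readDigit, Option.some.injEq, Prod.mk.injEq, reduceCtorEq] at h
  · omega
  · exact h.2 ▸ digit_le _ _

theorem Licenses.group (h : Licenses x j u) : u.1.group = some j := by
  cases x with
  | guess _ => exact h.elim
  | reset s l =>
    rcases h with ⟨h, _⟩ | ⟨e, h, _⟩
    · rw [h, CounterVar.group]
    · exact group_of_readDigit h
  | advance i c => exact group_of_readDigit h.choose_spec.1
  | final _ => exact group_of_readDigit h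

theorem not_conflict_guess (u : CounterNode r N M D) (j : Fin r) (b : CounterVal r M) :
    ¬ Conflict u (.guess j, b) := by
  cases b <;> exact id

theorem Conflict.modEq_of_readDigit (h : Conflict u v) (hv : readDigit v = some (j, e')) :
    ∃ e, readDigit u = some (j, e) ∧ e' ≠ e + 1 ∧ e' ≡ e + 1 [MOD 2 * N] := by
  obtain ⟨x, b | b⟩ := v
  · cases x <;> simp only [readDigit, Option.some.injEq, Prod.mk.injEq, reduceCtorEq] at hv
    · exact h.elim
    · obtain ⟨rfl, rfl⟩ := hv
      obtain ⟨e, hu, ⟨a, ha⟩, hne⟩ := h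
      exact ⟨e, hu, hne, ha ▸ digit_modEq _ _ _⟩
  · cases x <;> simp [readDigit] at hv

theorem not_conflict_self_of_readDigit (hv : readDigit v = some (j, e)) : ¬ Conflict v v := by
  intro h
  obtain ⟨e', he', -, hmod⟩ := h.modEq_of_readDigit hv
  obtain rfl : e = e' := by simpa [hv] using he'
  exact not_modEq_succ_self e hmod

theorem not_licenses_of_readDigit_eq_none (hu : readDigit u = none)
    (hguess : ∀ j, u.1 ≠ .guess j) : ¬ Licenses x j u := by
  cases x <;> simp [Licenses, hu, hguess]

theorem Conflict.self_of_readDigit_eq_none (h : Conflict u v) (hu : readDigit u = none)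
    (hguess : ∀ j, u.1 ≠ .guess j) : Conflict v v := by
  obtain ⟨x, b | b⟩ := v
  · cases x <;> simp_all [Conflict]
  · exact absurd h (not_licenses_of_readDigit_eq_none hu hguess)

/-- The nodes `u` display the configuration `t` of the counter. -/
def Displays (u : Fin r → CounterNode r N M D) (t : ℕ → ℕ) : Prop :=
  ∀ j : Fin r, readDigit (u j) = some (j, t j)

theorem Displays.update {u : Fin r → CounterNode r N M D} {t : ℕ → ℕ} (hu : Displays u t)
    (hv : readDigit v = some (i, e)) :
    Displays (Function.update u i v) (Function.update t i e) := by
  intro j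
  by_cases hji : j = i
  · subst hji
    simpa using hv
  · simpa [Function.update_of_ne hji, Function.update_of_ne (Fin.val_ne_of_ne hji)] using hu j

theorem exists_displays {u : Fin r → CounterNode r N M D} {P : Fin r → ℕ → Prop}
    (h : ∀ j, ∃ e, readDigit (u j) = some (j, e) ∧ P j e) :
    ∃ t : ℕ → ℕ, Displays u t ∧ ∀ j, P j (t j) := by
  choose e he hP using h
  refine ⟨Function.extend Fin.val e 0, fun j => ?_, fun j => ?_⟩ <;>
    rw [Fin.val_injective.extend_apply]
  exacts [he j, hP j]

theorem card_image_univ_le (u : Fin r → CounterNode r N M D) : (Finset.univ.image u).card ≤ r :=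
  Finset.card_image_le.trans (by simp)

/-! ### Duplicator's strategy -/

/-- The configuration `t` selects one of the entries displayed in the position `p` for each digit,
or zero. -/
def IsReading (p : Finset (CounterNode r N M D)) (t : ℕ → ℕ) : Prop :=
  ∀ j : Fin r, t j = 0 ∨ ∃ u ∈ p, readDigit u = some (j, t j)

/-- Duplicator's invariant: the position `p` is consistent, and whichever way the counter is read
off from it, at least `d` increments are missing to the maximum. -/
def Safe (d : ℕ) (p : Finset (CounterNode r N M D)) : Prop :=
  PartialHom (counterSource r N D) (counterTarget r N M D) p ∧
    ∀ t, IsReading p t → rank (N * M + 1) t r + d ≤ (N * M + 1) ^ r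

variable {p q : Finset (CounterNode r N M D)} {b : CounterVal r M} {d : ℕ} {t t' : ℕ → ℕ}

theorem IsReading.mono (ht : IsReading p t) (hpq : p ⊆ q) : IsReading q t :=
  fun j => (ht j).imp_right fun ⟨u, hu, h⟩ => ⟨u, hpq hu, h⟩

theorem IsReading.of_insert (ht : IsReading (insert v p) t)
    (hv : ∀ j e, readDigit v = some (j, e) → e = 0) : IsReading p t := by
  intro j
  rcases ht j with h | ⟨u, hu, h⟩
  · exact .inl h
  · rcases Finset.mem_insert.1 hu with rfl | hu
    · exact .inl (hv _ _ h)
    · exact .inr ⟨u, hu, h⟩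

theorem Displays.isReading {u : Fin r → CounterNode r N M D} (hu : Displays u t) :
    IsReading (Finset.univ.image u) t :=
  fun j => .inr ⟨u j, Finset.mem_image_of_mem u (Finset.mem_univ j), hu j⟩

theorem IsReading.of_insert_displays {u : Fin r → CounterNode r N M D}
    (ht' : IsReading (insert v (Finset.univ.image u)) t') (hu : Displays u t)
    (hv : readDigit v = some (i, e)) (j : Fin r) :
    t' j = 0 ∨ t' j = t j ∨ j = i ∧ t' j = e := by
  rcases ht' j with h | ⟨w, hw, h⟩
  · exact .inl h
  · simp only [Finset.mem_insert, Finset.mem_image, Finset.mem_univ, true_and] at hw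
    rcases hw with rfl | ⟨j', rfl⟩
    · simp only [hv, Option.some.injEq, Prod.mk.injEq] at h
      exact .inr (.inr ⟨h.1.symm, h.2.symm⟩)
    · simp only [hu j', Option.some.injEq, Prod.mk.injEq] at h
      obtain ⟨rfl, h⟩ := h
      exact .inr (.inl h.symm)

theorem Safe.mono (hp : Safe d p) (hqp : q ⊆ p) : Safe d q :=
  ⟨hp.1.mono hqp, fun t ht => hp.2 t (ht.mono hqp)⟩

theorem Safe.not_conflict (hp : Safe d p) (hu : u ∈ p) (hv : v ∈ p) : ¬ Conflict u v :=
  (partialHom_conflict_iff.1 hp.1).2 u hu v hv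

theorem safe_empty (hd : d < (N * M + 1) ^ r) : Safe d (∅ : Finset (CounterNode r N M D)) := by
  refine ⟨partialHom_conflict_iff.2 (by simp [Functional]), fun t ht => ?_⟩
  rw [rank_of_forall_eq_zero fun j hj => by simpa using ht ⟨j, hj⟩]
  omega

theorem Safe.insert_of_readDigit_eq_zero (hp : Safe (d + 1) p) (hx : ∀ u ∈ p, u.1 ≠ x)
    (hread : ∀ j e, readDigit (x, b) = some (j, e) → e = 0)
    (hself : ¬ Conflict (x, b) (x, b)) (hto : ∀ u ∈ p, ¬ Conflict u (x, b))
    (hfrom : ∀ v ∈ p, ¬ Conflict (x, b) v) : Safe d (insert (x, b) p) := by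
  refine ⟨hp.1.insert_conflict hx hself hto hfrom, fun t ht => ?_⟩
  have := hp.2 t (ht.of_insert hread)
  omega

theorem Safe.insert_blank (hp : Safe (d + 1) p) (hx : ∀ u ∈ p, u.1 ≠ x)
    (hguess : ∀ j, x ≠ .guess j) (hj : ∀ u ∈ p, ¬ Licenses x j u) :
    Safe d (insert (x, .inr j) p) := by
  have hnone : readDigit ((x, .inr j) : CounterNode r N M D) = none := by cases x <;> rfl
  exact hp.insert_of_readDigit_eq_zero hx (by simp [hnone])
    (not_licenses_of_readDigit_eq_none hnone hguess) hj
    fun v hv h => hp.not_conflict hv hv (h.self_of_readDigit_eq_none hnone hguess)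

/-- There are more codes for the value of a guess than nodes in `p`, hence one that none of the
reset variables in `p` expects. -/
theorem Safe.exists_insert_guess (hM : 0 < M) (hp : Safe (d + 1) p) (hcard : p.card ≤ r)
    (hx : ∀ u ∈ p, u.1 ≠ .guess j) : ∃ b, Safe d (insert (.guess j, b) p) := by
  let expected (u : CounterNode r N M D) : Option (Fin r) :=
    match u.1 with
    | .reset s _ => s j
    | _ => none
  obtain ⟨code, hcode⟩ : ∃ code, code ∉ p.image expected := by
    by_contra! h
    have := Finset.card_image_le (s := p) (f := expected)
    rw [Finset.eq_univ_iff_forall.2 h, Finset.card_univ, Fintype.card_option, Fintype.card_fin]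
      at this
    omega
  obtain ⟨b, rfl⟩ : ∃ b : CounterVal r M, b.getRight? = code := by
    cases code with
    | none => exact ⟨.inl ⟨0, hM⟩, rfl⟩
    | some j' => exact ⟨.inr j', rfl⟩
  have hnone : readDigit ((.guess j, b) : CounterNode r N M D) = none := by cases b <;> rfl
  refine ⟨b, hp.insert_of_readDigit_eq_zero hx (by simp [hnone]) (not_conflict_guess _ _ _)
    (fun u _ => not_conflict_guess _ _ _) ?_⟩
  rintro ⟨y, a | j'⟩ hv h
  · cases y with
    | final => exact hp.not_conflict hv hv trivial
    | _ => simp [Conflict, hnone] at h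
  · cases y with
    | reset s l =>
      obtain ⟨rfl, hs⟩ : j = j' ∧ b.getRight? = s j' := by
        simpa [Conflict, Licenses, hnone] using h
      exact hcode (Finset.mem_image.2 ⟨_, hv, hs.symm⟩)
    | _ => simp [Conflict, Licenses, hnone] at h

theorem Safe.insert_reset {u : Fin r → CounterNode r N M D} {s : Fin r → Option (Fin r)}
    {l : Fin r} (hp : Safe (d + 1) (Finset.univ.image u))
    (hx : ∀ v ∈ Finset.univ.image u, v.1 ≠ .reset s l) (hu : ∀ j, Licenses (.reset s l) j (u j))
    (a : Fin M) : Safe d (insert (.reset s l, .inl a) (Finset.univ.image u)) := by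
  refine hp.insert_of_readDigit_eq_zero hx (by simp [readDigit])
    (not_conflict_self_of_readDigit rfl) (fun _ _ => id) ?_
  simp only [Finset.forall_mem_image, Finset.mem_univ, forall_const]
  intro j h
  rcases hu j with ⟨hguess, -⟩ | ⟨e, he, htop⟩
  · rw [← Prod.eta (u j), hguess] at h
    exact not_conflict_guess _ _ _ h
  · obtain ⟨_, hread, -, hmod⟩ := h.modEq_of_readDigit he
    obtain ⟨rfl, rfl⟩ : l = j ∧ 0 = _ := by simpa [readDigit] using hread
    rw [htop rfl] at hmod
    have : 2 * (N * M) ≡ 0 + 1 [MOD 2] := hmod.of_mul_right N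
    simp only [Nat.ModEq] at this
    omega

theorem Safe.insert_advance {u : Fin r → CounterNode r N M D} {c : Fin (2 * N)} {a : Fin M}
    (hN : 2 ≤ N) (hp : Safe (d + 1) (Finset.univ.image u))
    (hx : ∀ v ∈ Finset.univ.image u, v.1 ≠ .advance i c) (hu : Displays u t)
    (hlow : ∀ j < i, t j = if Even (c : ℕ) then 2 * (N * M) else 0)
    (ha : digit c a = t i + 1) :
    Safe d (insert (.advance i c, .inl a) (Finset.univ.image u)) := by
  have hread : readDigit ((.advance i c, .inl a) : CounterNode r N M D) = some (i, t i + 1) := by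
    rw [readDigit, ha]
  refine ⟨hp.1.insert_conflict hx (not_conflict_self_of_readDigit hread) ?_ ?_, fun t' ht' => ?_⟩
  · simp only [Finset.forall_mem_image, Finset.mem_univ, forall_const]
    intro j h
    obtain ⟨_, he, hne, -⟩ := h.modEq_of_readDigit hread
    obtain ⟨rfl, rfl⟩ : j = i ∧ t j = _ := by simpa [hu j] using he
    exact hne rfl
  · simp only [Finset.forall_mem_image, Finset.mem_univ, forall_const]
    intro j h
    obtain ⟨_, he, -, hmod⟩ := h.modEq_of_readDigit (hu j)
    obtain ⟨rfl, rfl⟩ : i = j ∧ t i + 1 = _ := by simpa [hread] using he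
    have : 2 * N ∣ 2 := by
      simpa [add_assoc] using (Nat.modEq_iff_dvd' (by omega)).1 hmod
    have := Nat.le_of_dvd two_pos this
    omega
  · have hbound : ∀ j < r, t j ≤ 2 * (N * M) := fun j hj => readDigit_le (hu ⟨j, hj⟩)
    have hentry := ht'.of_insert_displays hu hread
    have hstep : rank (N * M + 1) (Function.update t i (t i + 1)) r ≤ rank (N * M + 1) t r + 1 :=
      rank_update_succ_le i.2 fun j hj => by
        simpa only [even_iff_of_digit_eq_succ ha] using hlow ⟨j, hj.trans i.2⟩ hj
    have hrank : rank (N * M + 1) t' r ≤ rank (N * M + 1) t r + 1 := by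
      by_cases hi : t' i = t i + 1
      · refine (rank_le_rank_of_eq_zero_or_eq (fun j hj => ?_) fun j hj => ?_).trans hstep
        · rcases eq_or_ne j i with rfl | hji
          · simpa [ha] using digit_le c a
          · simpa [hji] using hbound j hj
        · rcases eq_or_ne j i with rfl | hji
          · simp [hi]
          · simpa [hji, Fin.ext_iff] using hentry ⟨j, hj⟩
      · refine (rank_le_rank_of_eq_zero_or_eq hbound fun j hj => ?_).trans (Nat.le_succ _)
        rcases hentry ⟨j, hj⟩ with h | h | ⟨rfl, h⟩
        exacts [.inl h, .inr h, absurd h hi]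
    have := hp.2 t hu.isReading
    omega

theorem not_safe_of_displays_top {u : Fin r → CounterNode r N M D} (hu : Displays u t)
    (ht : ∀ j : Fin r, t j = 2 * (N * M)) : ¬ Safe (d + 1) (Finset.univ.image u) := by
  intro hp
  have := hp.2 t hu.isReading
  rw [rank_of_forall_eq_top fun j hj => ht ⟨j, hj⟩] at this
  omega

/-- The licensing nodes belong to `r` different groups, so there is no room for further nodes. -/
theorem image_univ_eq_of_licenses {u : Fin r → CounterNode r N M D} (hcard : p.card ≤ r)
    (hup : ∀ j, u j ∈ p) (hu : ∀ j, Licenses x j (u j)) : Finset.univ.image u = p := by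
  have hinj : Function.Injective u := fun j j' h =>
    Option.some.inj ((hu j).group.symm.trans (h ▸ (hu j').group))
  refine Finset.eq_of_subset_of_card_le (by simpa [Finset.image_subset_iff] using hup) ?_
  rwa [Finset.card_image_of_injective _ hinj, Finset.card_fin]

theorem Safe.exists_insert_of_licenses {u : Fin r → CounterNode r N M D} (hN : 2 ≤ N) (hM : 0 < M)
    (hp : Safe (d + 1) (Finset.univ.image u)) (hx : ∀ v ∈ Finset.univ.image u, v.1 ≠ x)
    (hu : ∀ j, Licenses x j (u j)) (hguess : ∀ j, x ≠ .guess j) :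
    ∃ b, Safe d (insert (x, b) (Finset.univ.image u)) := by
  cases x with
  | guess j => exact absurd rfl (hguess j)
  | reset s l => exact ⟨_, hp.insert_reset hx hu ⟨0, hM⟩⟩
  | advance i c =>
    obtain ⟨t, ht, hlow⟩ := exists_displays hu
    obtain ⟨a, ha⟩ := (hlow i).2 rfl
    exact ⟨_, hp.insert_advance hN hx ht (fun j hj => (hlow j).1 hj) ha⟩
  | final _ =>
    have htop : Displays u fun _ => 2 * (N * M) := hu
    exact absurd hp (not_safe_of_displays_top htop fun _ => rfl)

theorem Safe.exists_insert (hN : 2 ≤ N) (hM : 0 < M) (hp : Safe (d + 1) p) (hcard : p.card ≤ r)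
    (x : CounterVar r N D) : ∃ b, Safe d (insert (x, b) p) := by
  by_cases hx : ∃ b, (x, b) ∈ p
  · obtain ⟨b, hb⟩ := hx
    rw [← Finset.insert_eq_of_mem hb] at hp
    exact ⟨b, hp.1, fun t ht => (Nat.le_succ _).trans (hp.2 t ht)⟩
  have hfresh : ∀ u ∈ p, u.1 ≠ x := by
    rintro ⟨y, b⟩ hu rfl
    exact hx ⟨b, hu⟩
  by_cases hguess : ∃ j, x = .guess j
  · obtain ⟨j, rfl⟩ := hguess
    exact hp.exists_insert_guess hM hcard hfresh
  push Not at hguess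
  by_cases hlic : ∀ j, ∃ u ∈ p, Licenses x j u
  · choose u hup hu using hlic
    obtain rfl := image_univ_eq_of_licenses hcard hup hu
    exact hp.exists_insert_of_licenses hN hM hfresh hu hguess
  · push Not at hlic
    obtain ⟨j, hj⟩ := hlic
    exact ⟨_, hp.insert_blank hfresh hguess hj⟩

theorem le_of_deriv_counter_empty (hN : 2 ≤ N) (hM : 0 < M)
    (h : Deriv (counterSource r N D) (counterTarget r N M D) r ∅ d) : (N * M + 1) ^ r ≤ d := by
  by_contra! hd
  exact not_deriv_of_strategy (P := Safe) And.left Safe.mono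
    (fun hp hcard => hp.exists_insert hN hM hcard) (safe_empty hd) h

/-! ### A refutation -/

/-- All positions that display the configuration `t` have derivations. -/
def Refutable (N M D r : ℕ) (t : ℕ → ℕ) : Prop :=
  ∀ u : Fin r → CounterNode r N M D, Displays u t →
    Derivable (counterSource r N D) (counterTarget r N M D) r (Finset.univ.image u)

theorem functional_image_of_licenses {u : Fin r → CounterNode r N M D}
    (hu : ∀ j, Licenses x j (u j)) : Functional (Finset.univ.image u) := by
  intro y a a' h h'
  simp only [Finset.mem_image, Finset.mem_univ, true_and] at h h'
  obtain ⟨j, hj⟩ := h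
  obtain ⟨j', hj'⟩ := h'
  have hgroup := (hu j).group
  rw [hj, ← congrArg Prod.fst hj', (hu j').group] at hgroup
  obtain rfl := Option.some.inj hgroup
  simpa using hj.symm.trans hj'

theorem derivable_of_licenses {u : Fin r → CounterNode r N M D} (hu : ∀ j, Licenses x j (u j))
    (hx : ∀ j b, u j ≠ (x, b))
    (h : ∀ a, (∀ v ∈ insert (x, .inl a) (Finset.univ.image u), ¬ Conflict v (x, .inl a)) →
      ∃ i, Derivable (counterSource r N D) (counterTarget r N M D) r
        (Finset.univ.image (Function.update u i (x, .inl a)))) :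
    Derivable (counterSource r N D) (counterTarget r N M D) r (Finset.univ.image u) := by
  refine .of_query (functional_image_of_licenses hu) (card_image_univ_le u) (x := x)
    (by simpa [Prod.ext_iff] using hx) ?_
  rintro (a | j) hhom <;> have hcons := (partialHom_conflict_iff.1 hhom).2
  · obtain ⟨i, hi⟩ := h a fun v hv => hcons v hv _ (Finset.mem_insert_self _ _)
    refine ⟨(Finset.univ.image (Function.update u i (x, .inl a))).erase (x, .inl a), ?_, ?_⟩
    · simp only [Finset.subset_iff, Finset.mem_erase, Finset.mem_image, Finset.mem_univ, true_and]
      rintro _ ⟨hne, j, rfl⟩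
      have hji : j ≠ i := by rintro rfl; simp at hne
      exact ⟨j, (Function.update_of_ne hji _ _).symm⟩
    · rwa [Finset.insert_erase (Finset.mem_image.2 ⟨i, Finset.mem_univ i, by simp⟩)]
  · exact absurd (hu j) (hcons _ (by simp) _ (Finset.mem_insert_self _ _))

theorem refutable_of_forall_eq_top (hD : 0 < D) {t : ℕ → ℕ} (ht : ∀ j < r, t j = 2 * (N * M)) :
    Refutable N M D r t := by
  intro u hu
  have hlic (j : Fin r) : Licenses (.final ⟨0, hD⟩) j (u j) := by
    rw [Licenses, hu j, ht j j.2]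
  refine derivable_of_licenses hlic (fun j b hj => ?_)
    fun a h => absurd trivial (h _ (Finset.mem_insert_self _ _))
  simpa [hj, CounterVar.group] using (hlic j).group

theorem Refutable.of_counterStep (h : Refutable N M D r t') (hstep : CounterStep (N * M) r t t') :
    Refutable N M D r t := by
  intro u hu
  cases hstep with
  | advance i hi hlow =>
    obtain ⟨c, a, ha⟩ := exists_digit_eq_succ hi
    refine derivable_of_licenses (x := .advance i c) (fun j => ?_) (fun j b hj => ?_)
      fun a' hcons => ⟨i, h _ (hu.update ?_)⟩
    · refine ⟨t j, hu j, fun hj => ?_, ?_⟩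
      · simpa only [even_iff_of_digit_eq_succ ha] using hlow j hj
      · rintro rfl
        exact ⟨a, ha⟩
    · have hread := hu j
      rcases b with a₀ | _ <;>
        simp only [hj, readDigit, Option.some.injEq, Prod.mk.injEq, reduceCtorEq] at hread
      obtain ⟨rfl, hread⟩ := hread
      exact not_modEq_succ_self (t i) (by simpa only [hread, ha] using digit_modEq c a₀ a)
    · have hread := not_exists.1 (hcons (u i) (by simp)) (t i)
      rw [readDigit]
      simpa [hu i, ha, show ∃ a, digit c a = t i + 1 from ⟨a, ha⟩] using hread
  | reset i hi =>
    by_cases hi0 : t i = 0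
    · rw [← hi0, Function.update_eq_self] at h
      exact h u hu
    refine derivable_of_licenses (x := .reset (fun _ => none) i)
      (fun j => .inr ⟨t j, hu j, by rintro rfl; exact hi⟩) (fun j b hj => ?_)
      fun a _ => ⟨i, h _ (hu.update rfl)⟩
    have hread := hu j
    cases b <;> simp only [hj, readDigit, Option.some.injEq, Prod.mk.injEq, reduceCtorEq] at hread
    obtain ⟨rfl, hread⟩ := hread
    exact hi0 hread.symm

theorem Refutable.of_reflTransGen (h : Refutable N M D r t')
    (hsteps : Relation.ReflTransGen (CounterStep (N * M) r) t t') : Refutable N M D r t := by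
  induction hsteps using Relation.ReflTransGen.head_induction_on with
  | refl => exact h
  | head hstep _ ih => exact ih.of_counterStep hstep

theorem refutable_zero (hD : 0 < D) : Refutable N M D r 0 := by
  have hcount := reflTransGen_counterStep_fillBelow_top (K := N * M) (le_refl r) 0
  rw [show fillBelow r 0 0 = 0 from funext fun j => ite_self _] at hcount
  exact (refutable_of_forall_eq_top hD fun j hj => fillBelow_apply_of_lt hj _ _).of_reflTransGen
    hcount

/-- The guesses in the groups of `s` are replaced by resets one by one. -/
theorem derivable_of_guess_or_reset (hD : 0 < D) (b : Fin r → CounterVal r M) (s : Finset (Fin r))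
    {u : Fin r → CounterNode r N M D} (hguess : ∀ j ∈ s, u j = (.guess j, b j))
    (hreset : ∀ j ∉ s, ∃ a, u j = (.reset (fun l => (b l).getRight?) j, .inl a)) :
    Derivable (counterSource r N D) (counterTarget r N M D) r (Finset.univ.image u) := by
  induction s using Finset.induction_on generalizing u with
  | empty =>
    refine refutable_zero hD u fun j => ?_
    obtain ⟨a, ha⟩ := hreset j (Finset.notMem_empty j)
    rw [ha]
    rfl
  | insert i s his ih =>
    refine derivable_of_licenses (x := .reset (fun l => (b l).getRight?) i) (fun j => ?_)
      (fun j b' hj => ?_) fun a _ => ⟨i, ih (fun j hj => ?_) fun j hj => ?_⟩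
    · by_cases hjs : j ∈ insert i s
      · exact .inl (by simp [hguess j hjs])
      · obtain ⟨a, ha⟩ := hreset j hjs
        exact .inr ⟨0, by rw [ha, readDigit], by rintro rfl; simp at hjs⟩
    · by_cases hjs : j ∈ insert i s
      · simp [hguess j hjs] at hj
      · obtain ⟨a, ha⟩ := hreset j hjs
        simp only [ha, Prod.mk.injEq, CounterVar.reset.injEq, true_and] at hj
        simp [hj.1] at hjs
    · rw [Function.update_of_ne (ne_of_mem_of_not_mem hj his)]
      exact hguess j (Finset.mem_insert_of_mem hj)
    · rcases eq_or_ne j i with rfl | hji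
      · exact ⟨a, Function.update_self ..⟩
      · rw [Function.update_of_ne hji]
        exact hreset j (by simp [hji, hj])

theorem derivable_counter_empty (hM : 0 < M) (hD : 0 < D) :
    Derivable (counterSource r N D) (counterTarget r N M D) r ∅ := by
  have : Nonempty (CounterVal r M) := ⟨.inl ⟨0, hM⟩⟩
  refine derivable_empty_of_forall_graph (Finset.univ.image .guess)
    (Finset.card_image_le.trans (by simp)) fun g => ?_
  rw [Finset.image_image]
  exact derivable_of_guess_or_reset hD (fun j => g (.guess j)) Finset.univ (fun _ _ => rfl)
    fun j hj => absurd (Finset.mem_univ j) hj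

end Network

/-! ### Choice of parameters -/

theorem exists_binary_deriv_pow_le {r N M D n m : ℕ} (hN : 2 ≤ N) (hM : 0 < M) (hD : 0 < D)
    (hn : r + (r + 1) ^ r * r + r * (2 * N) + D = n) (hm : M + r = m) :
    ∃ (ι : Type) (_ : Fintype ι) (A : RelStruct ι (Fin n)) (B : RelStruct ι (Fin m)),
      Binary A ∧ Binary B ∧ (∃ d, Deriv A B r ∅ d) ∧
      ∀ d, Deriv A B r ∅ d → (N * M + 1) ^ r ≤ d := by
  let ea : CounterVar r N D ≃ Fin n := Fintype.equivFinOfCardEq (card_counterVar.trans hn)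
  let eb : CounterVal r M ≃ Fin m := Fintype.equivFinOfCardEq (by simpa using hm)
  refine ⟨_, inferInstance, (counterSource r N D).relabel ea, (counterTarget r N M D).relabel eb,
    binary_conflictSource.relabel ea, binary_conflictTarget.relabel eb, ?_, ?_⟩
  · simpa only [deriv_relabel_empty_iff, Derivable] using derivable_counter_empty hM hD
  · simpa only [deriv_relabel_empty_iff] using fun d => le_of_deriv_counter_empty hN hM

theorem exists_add_add_eq_and_le_mul {r c n : ℕ} (hr : 0 < r) (hn : 2 * (c + 1) + 4 * r ≤ n) :
    ∃ N D : ℕ, 2 ≤ N ∧ 0 < D ∧ c + r * (2 * N) + D = n ∧ n ≤ 8 * (r * N) := by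
  set N := (n - c - 1) / (2 * r)
  have hdiv : 2 * (r * N) + (n - c - 1) % (2 * r) = n - c - 1 := by
    rw [← mul_assoc]
    exact Nat.div_add_mod _ _
  have hmod : (n - c - 1) % (2 * r) < 2 * r := Nat.mod_lt _ (by omega)
  have hN : 2 ≤ N := (Nat.le_div_iff_mul_le (by omega)).2 (by omega)
  have hrN : r * 2 ≤ r * N := Nat.mul_le_mul_left r hN
  refine ⟨N, (n - c - 1) % (2 * r) + 1, hN, Nat.succ_pos _, ?_, by omega⟩
  rw [mul_left_comm r 2]
  omega

theorem inv_pow_mul_pow_mul_pow_le {r N M n m : ℕ} (hr : 0 < r) (hn : n ≤ 8 * (r * N))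
    (hm : m ≤ 2 * M) :
    ((16 * r : ℝ) ^ r)⁻¹ * n ^ r * m ^ r ≤ ((N * M + 1) ^ r : ℕ) := by
  have hnm : n * m ≤ 16 * r * (N * M + 1) :=
    calc n * m ≤ 8 * (r * N) * (2 * M) := Nat.mul_le_mul hn hm
      _ ≤ 16 * r * (N * M + 1) := by linarith
  rw [mul_assoc, inv_mul_le_iff₀ (by positivity), ← mul_pow]
  exact_mod_cast (Nat.pow_le_pow_left hnm r).trans_eq (mul_pow ..)

end CSP

/-- for every `k ≥ 2` there are `ε > 0` and `n₀, m₀ ≥ 1` such that for all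
`n ≥ n₀`, `m ≥ m₀` there are binary relational structures `A` (with `n` elements) and `B`
(with `m` elements) over a common finite vocabulary such that a CSP-refutation of width
at most `k-1` exists and `depth^k(A,B) ≥ ε · n^(k-1) · m^(k-1)`. -/
theorem csp_propagation_depth_lower_bound (k : ℕ) (hk : 2 ≤ k) :
    ∃ ε : ℝ, 0 < ε ∧ ∃ n₀ m₀ : ℕ, 0 < n₀ ∧ 0 < m₀ ∧
      ∀ n m : ℕ, n₀ ≤ n → m₀ ≤ m →
        ∃ (ι : Type) (_ : Fintype ι) (A : RelStruct ι (Fin n)) (B : RelStruct ι (Fin m)),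
          CSP.Binary A ∧ CSP.Binary B ∧
          (∃ d, CSP.Deriv A B (k - 1) (∅ : Finset (Fin n × Fin m)) d) ∧
          ε * (n : ℝ) ^ (k - 1) * (m : ℝ) ^ (k - 1) ≤
            ((sInf {d : ℕ | CSP.Deriv A B (k - 1) (∅ : Finset (Fin n × Fin m)) d} : ℕ) : ℝ) := by
  have hr : 0 < k - 1 := Nat.sub_pos_of_lt hk
  set r := k - 1
  refine ⟨((16 * r : ℝ) ^ r)⁻¹, by positivity, 2 * (r + (r + 1) ^ r * r + 1) + 4 * r, 2 * r + 1,
    by positivity, by positivity, fun n m hn hm => ?_⟩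
  obtain ⟨N, D, hN, hD, hND, hnN⟩ := CSP.exists_add_add_eq_and_le_mul hr hn
  obtain ⟨M, rfl⟩ := Nat.exists_eq_add_of_le' (show r ≤ m by omega)
  obtain ⟨ι, hι, A, B, hA, hB, hrefutation, hdepth⟩ :=
    CSP.exists_binary_deriv_pow_le (M := M) hN (by omega) hD hND rfl
  refine ⟨ι, hι, A, B, hA, hB, hrefutation, ?_⟩
  exact (CSP.inv_pow_mul_pow_mul_pow_le hr hnN (by omega)).trans
    (Nat.cast_le.2 (hdepth _ (Nat.sInf_mem hrefutation)))
end

section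
/- For every integer k ≥ 3 there exist a constant c > 0 and positive integers n_0, m_0 such that for all n ≥ n_0 and m ≥ m_0 there exist finite vertex-colored graphs A and B with |V(A)| ≤ c·n and |V(B)| ≤ c·m with the following properties: Spoiler has a winning strategy in the existential k-pebble game on A and B, and, setting N = n^(k−1) · m^(k−1), Duplicator has critical strategies G^start, F_1, G_1, F_2, G_2, …, G_{N−2}, F_{N−1} in the existential k-pebble game on A and B satisfying crit(G^start) ⊆ F_1 ∖ crit(F_1), crit(G_i) ⊆ (F_{i+1} ∖ crit(F_{i+1})) ∪ (G^start ∖ crit(G^start)) for all 1 ≤ i ≤ N−2, and crit(F_i) ⊆ (G_i ∖ crit(G_i)) ∪ (G^start ∖ crit(G^start)) for all 1 ≤ i ≤ N−2. -/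
/-- A vertex-colored (finite simple) graph on vertex type `V` with colors in `C`. -/
structure ColoredGraph (V : Type) (C : Type) where
  graph : SimpleGraph V
  color : V → C

namespace PebbleCG

variable {α β C : Type}

/-- A finite set of pairs is a partial map if it is functional. -/
def Functional (p : Finset (α × β)) : Prop :=
  ∀ ⦃x : α⦄ ⦃y y' : β⦄, (x, y) ∈ p → (x, y') ∈ p → y = y'

/-- `p` is a partial homomorphism between the vertex-colored graphs `A` and `B`:
a partial map that preserves colors and maps edges to edges. -/
def PartialHom (A : ColoredGraph α C) (B : ColoredGraph β C) (p : Finset (α × β)) : Prop :=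
  Functional p ∧
  (∀ ⦃x y⦄, (x, y) ∈ p → B.color y = A.color x) ∧
  (∀ ⦃x y x' y'⦄, (x, y) ∈ p → (x', y') ∈ p → A.graph.Adj x x' → B.graph.Adj y y')

/-- Spoiler wins the existential `K`-pebble game played on the vertex sets `S` of `A`
and `D` of `B`, starting from position `p` (after finitely many rounds): either the
position is already not a partial homomorphism, or Spoiler can pick up pebbles and place
a free pebble on some `x ∈ S` so that he wins against every answer `b ∈ D`. -/
inductive SpoilerWins [DecidableEq α] [DecidableEq β]
    (A : ColoredGraph α C) (B : ColoredGraph β C)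
    (S : Set α) (D : Set β) (K : ℕ) : Finset (α × β) → Prop
  | win {p : Finset (α × β)} :
      ¬ PartialHom A B p → SpoilerWins A B S D K p
  | move {p : Finset (α × β)} (p' : Finset (α × β)) (x : α) :
      p' ⊆ p → p'.card < K → x ∈ S →
      (∀ b ∈ D, SpoilerWins A B S D K (insert (x, b) p')) →
      SpoilerWins A B S D K p

/-- `SpoilerReach A B S D K p q`: starting from position `p`, Spoiler has a strategy in
the existential `K`-pebble game (played on the vertex sets `S` and `D`) guaranteeing
that after finitely many rounds he has either won or reached exactly the position `q`. -/
inductive SpoilerReach [DecidableEq α] [DecidableEq β]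
    (A : ColoredGraph α C) (B : ColoredGraph β C)
    (S : Set α) (D : Set β) (K : ℕ) : Finset (α × β) → Finset (α × β) → Prop
  | refl {p : Finset (α × β)} : SpoilerReach A B S D K p p
  | win {p q : Finset (α × β)} :
      ¬ PartialHom A B p → SpoilerReach A B S D K p q
  | move {p q : Finset (α × β)} (p' : Finset (α × β)) (x : α) :
      p' ⊆ p → p'.card < K → x ∈ S →
      (∀ b ∈ D, SpoilerReach A B S D K (insert (x, b) p') q) →
      SpoilerReach A B S D K p q

/-- `H` together with the set `crit ⊆ H` of critical positions is a critical strategy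
for Duplicator in the existential `K`-pebble game on the vertex-colored graphs `A`
(restricted to `S`) and `B` (restricted to `D`).  If `crit = ∅` it is a winning
strategy. -/
structure IsCriticalStrategy [DecidableEq α] [DecidableEq β]
    (A : ColoredGraph α C) (B : ColoredGraph β C)
    (S : Set α) (D : Set β) (K : ℕ)
    (H crit : Set (Finset (α × β))) : Prop where
  nonempty : H.Nonempty
  crit_subset : crit ⊆ H
  mem_SD : ∀ p ∈ H, ∀ z ∈ p, Prod.fst z ∈ S ∧ Prod.snd z ∈ D
  isHom : ∀ p ∈ H, PartialHom A B p
  crit_card : ∀ p ∈ crit, p.card = K - 1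
  downward : ∀ p ∈ H, ∀ q ⊆ p, q ∈ H
  extend : ∀ g ∈ H, g ∉ crit → g.card < K → ∀ x ∈ S, ∃ b ∈ D, insert (x, b) g ∈ H

/-- The family `H` of positions has boundary function `f` on the (Spoiler-side) boundary
`bS`: every position of `H` agrees with `f` on boundary vertices in its domain. -/
def HasBoundaryFun (H : Set (Finset (α × β))) (bS : Set α) (f : α → β) : Prop :=
  ∀ h ∈ H, ∀ z ∈ bS, ∀ y : β, (z, y) ∈ h → y = f z

end PebbleCG

/-!
With `r = k - 1`, the game simulates an `r`-digit counter in base `n * m`. A digit `x * m + y` is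
encoded by a pebbled pair: the column `x : ZMod n` is the vertex that Spoiler pebbles, and
`y : ZMod m` is part of Duplicator's answer, so that `n * m` digit values cost only `O(n)` and
`O(m)` vertices. The digits are written one after the other. The next one is determined by the last
`r`, which form a window: the digit `r` steps back is its previous value, and the digit one step
back determines the carry. Hence Spoiler, moving one window on at a time, forces Duplicator through
all values of the counter up to the overflow, where she has no answer.

Nothing else helps him. If one of the last `r` digits is not pebbled, or if he moves to a wrong
column, Duplicator dodges, that is, gives an answer that does not constrain later ones. So she only
has to make sure that no window of the counter occurs before it is its turn: her strategy number `i`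
breaks down only at the window of time `i`, which the strategy number `i + 1` contains as a
noncritical position.

Spoiler reaches the first window by means of a pigeonhole gadget. For initial digits each dodge is
blocked by a pebbled hole or digit, and blocking all `r` of them takes all of Spoiler's pebbles but
the one he moves, and one of them lies on the hole `1`. That hole admits no digits other than the
initial ones, so this never leads to a later window.
-/

namespace PebbleCG

variable {α β C : Type} {A : ColoredGraph α C} {B : ColoredGraph β C} {p q : Finset (α × β)}

theorem PartialHom.mono (hq : PartialHom A B q) (hpq : p ⊆ q) : PartialHom A B p :=
  ⟨fun _ _ _ h h' => hq.1 (hpq h) (hpq h'), fun _ _ h => hq.2.1 (hpq h),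
    fun _ _ _ _ h h' => hq.2.2 (hpq h) (hpq h')⟩

variable [DecidableEq α] [DecidableEq β] {S : Set α} {D : Set β} {K : ℕ}

theorem SpoilerWins.mono (hp : SpoilerWins A B S D K p) (hpq : p ⊆ q) :
    SpoilerWins A B S D K q := by
  cases hp with
  | win hp => exact .win fun hq => hp (hq.mono hpq)
  | move p' x hp' hcard hx hwins => exact .move p' x (hp'.trans hpq) hcard hx hwins

theorem SpoilerWins.of_forall_insert {x : α} (hcard : p.card < K) (hx : x ∈ S)
    (h : ∀ b ∈ D, PartialHom A B (insert (x, b) p) → SpoilerWins A B S D K (insert (x, b) p)) :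
    SpoilerWins A B S D K p :=
  .move p x subset_rfl hcard hx fun b hb => (em _).elim (h b hb) .win

theorem SpoilerWins.of_forall_graph [Nonempty β] {s : Finset α} (hcard : s.card ≤ K)
    (hsS : ∀ a ∈ s, a ∈ S)
    (h : ∀ f : α → β, (∀ a ∈ s, f a ∈ D) →
      SpoilerWins A B S D K (s.image fun a => (a, f a))) :
    SpoilerWins A B S D K ∅ := by
  induction s using Finset.induction_on with
  | empty => simpa using h (fun _ => Classical.arbitrary β) (by simp)
  | insert a s ha ih =>
    rw [Finset.card_insert_of_notMem ha] at hcard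
    refine ih (by omega) (fun x hx => hsS x (Finset.mem_insert_of_mem hx)) fun f hf =>
      .of_forall_insert (Finset.card_image_le.trans_lt hcard) (hsS a (s.mem_insert_self a))
        fun b hb _ => ?_
    have hupdate : ∀ x ∈ s, Function.update f a b x = f x := fun x hx =>
      Function.update_of_ne (by rintro rfl; exact ha hx) b f
    have hmem : ∀ x ∈ insert a s, Function.update f a b x ∈ D := by
      intro x hx
      obtain rfl | hx := Finset.mem_insert.mp hx
      · simpa using hb
      · exact (hupdate x hx).symm ▸ hf x hx
    have himage : (s.image fun x => (x, Function.update f a b x)) = s.image fun x => (x, f x) :=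
      Finset.image_congr fun x hx => by simp only [hupdate x hx]
    simpa [Finset.image_insert, himage] using h _ hmem

end PebbleCG

/-- The colored graph with vertex coloring `color` in which two distinct vertices are adjacent
when the relation `R` holds between them in one of the two directions.  Giving the edges of a
gadget as arcs keeps track of which endpoint constrains the other. -/
def ColoredGraph.ofRel {V C : Type} (R : V → V → Prop) (color : V → C) : ColoredGraph V C where
  graph := SimpleGraph.fromRel R
  color := color

section Pigeonhole

variable {ι γ : Type*} [Fintype ι] {R : γ → ι → Prop} {g : Finset γ}

theorem exists_forall_not_rel_of_card_lt (hR : Relator.RightUnique R)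
    (hg : g.card < Fintype.card ι) : ∃ i, ∀ e ∈ g, ¬ R e i := by
  by_contra! h
  choose e he heR using h
  obtain ⟨i, -, j, -, hij, heq⟩ := Finset.exists_ne_map_eq_of_card_lt_of_maps_to
    (s := Finset.univ) hg fun i _ => he i
  exact hij (hR (heR i) (heq ▸ heR j))

theorem card_eq_and_forall_exists_rel (hR : Relator.RightUnique R)
    (hg : g.card ≤ Fintype.card ι) (h : ∀ i, ∃ e ∈ g, R e i) :
    g.card = Fintype.card ι ∧ ∀ e ∈ g, ∃ i, R e i := by
  classical
  refine ⟨hg.eq_of_not_lt fun hlt => ?_, fun e he => ?_⟩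
  · obtain ⟨i, hi⟩ := exists_forall_not_rel_of_card_lt hR hlt
    obtain ⟨e, he, heR⟩ := h i
    exact hi e he heR
  · by_contra! hne
    obtain ⟨i, hi⟩ := exists_forall_not_rel_of_card_lt (g := g.erase e) hR
      ((Finset.card_erase_lt_of_mem he).trans_le hg)
    obtain ⟨e', he', heR⟩ := h i
    exact hi e' (Finset.mem_erase.mpr ⟨by rintro rfl; exact hne i heR, he'⟩) heR

end Pigeonhole

namespace PebbleCounter

open PebbleCG

/-! ### The two graphs -/

section Classes

variable {r : ℕ}

/-- The number of steps that lead from the class `v` forward to the class `u` on the cycle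
`ZMod (3 * r)`, along which the tokens of the counter are laid out. -/
def gap (v u : ZMod (3 * r)) : ℕ := (u - v).val

/-- The class `v` is one of the `r` classes just before `u`.  There are `3 * r` classes so that
this relation is asymmetric and orients the edges between tokens in time. -/
def Precedes (v u : ZMod (3 * r)) : Prop := 1 ≤ gap v u ∧ gap v u ≤ r

theorem gap_natCast {v u : ℕ} (hvu : v ≤ u) (h : u < v + 3 * r) :
    gap (v : ZMod (3 * r)) u = u - v := by
  rw [gap, ← Nat.cast_sub hvu, ZMod.val_cast_of_lt (by omega)]

theorem not_precedes_self (v : ZMod (3 * r)) : ¬ Precedes v v := by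
  simp [Precedes, gap]

variable [NeZero r]

theorem add_gap (v u : ZMod (3 * r)) : v + (gap v u : ℕ) = u := by
  rw [gap, ZMod.natCast_zmod_val, add_sub_cancel]

theorem Precedes.asymm {v u : ZMod (3 * r)} (h : Precedes v u) : ¬ Precedes u v := by
  have hval := ZMod.neg_val (u - v)
  rw [neg_sub] at hval
  unfold Precedes gap at *
  split_ifs at hval with h0
  · simp [h0] at h
  · omega

theorem precedes_natCast {v u : ℕ} (hvu : v ≤ u + r) (huv : u ≤ v + r) :
    Precedes (v : ZMod (3 * r)) u ↔ v < u := by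
  have hr := NeZero.pos r
  rcases lt_trichotomy v u with h | rfl | h
  · simp only [Precedes, gap_natCast h.le (by omega : u < v + 3 * r), h, iff_true]
    omega
  · simp [not_precedes_self]
  · have huv' : Precedes (u : ZMod (3 * r)) v := by
      rw [Precedes, gap_natCast h.le (by omega)]
      omega
    simp [huv'.asymm, h.le]

theorem eq_of_natCast_eq {v u : ℕ} (hvu : v ≤ u + r) (huv : u ≤ v + r)
    (h : (v : ZMod (3 * r)) = u) : v = u := by
  have hv := (precedes_natCast hvu huv).not.mp (h ▸ not_precedes_self _)
  have hu := (precedes_natCast huv hvu).not.mp (h ▸ not_precedes_self _)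
  omega

end Classes

section Columns

variable {n : ℕ}

/-- The color that Duplicator sees of the column `x`: it singles out the column `0` and tells
whether the column changes in a single step, so that `n` columns need only three colors. -/
def columnColor (x : ZMod n) : Fin 3 := if x = 0 then 0 else if x.val % 2 = 1 then 1 else 2

/-- The column `z` may follow the column `x` when a digit is counted up. -/
def Step (x z : ZMod n) : Prop := z = x ∨ z = x + 1

theorem columnColor_eq_zero {x : ZMod n} : columnColor x = 0 ↔ x = 0 := by
  unfold columnColor
  split_ifs <;> simp_all

theorem columnColor_add_one_ne (hn : 2 ≤ n) (x : ZMod n) : columnColor (x + 1) ≠ columnColor x := by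
  have : Fact (1 < n) := ⟨hn⟩
  have : NeZero n := ⟨by omega⟩
  by_cases hx : x = 0
  · simp [hx, columnColor_eq_zero.mpr rfl, columnColor_eq_zero]
  by_cases hx' : x + 1 = 0
  · rw [hx', columnColor_eq_zero.mpr rfl]
    exact fun h => hx (columnColor_eq_zero.mp h.symm)
  have hlt : x.val + 1 < n := (Nat.succ_le_iff.mpr (ZMod.val_lt x)).lt_of_ne fun h =>
    hx' (by simpa using congrArg (Nat.cast : ℕ → ZMod n) h)
  have hval : (x + 1).val = x.val + 1 := by
    rw [ZMod.val_add_of_lt (by rwa [ZMod.val_one]), ZMod.val_one]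
  simp only [columnColor, hx, hx', if_false, hval]
  split_ifs <;> first | decide | omega

theorem Step.columnColor_ne_iff (hn : 2 ≤ n) {x z : ZMod n} (h : Step x z) :
    columnColor z ≠ columnColor x ↔ z = x + 1 := by
  refine ⟨fun hne => h.resolve_left fun hzx => hne (by rw [hzx]), ?_⟩
  rintro rfl
  exact columnColor_add_one_ne hn x

theorem Step.eq_of_columnColor_ne_iff (hn : 2 ≤ n) {x z z' : ZMod n} (h : Step x z)
    (h' : Step x z') (hc : columnColor z ≠ columnColor x ↔ columnColor z' ≠ columnColor x) :
    z = z' := by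
  rw [h.columnColor_ne_iff hn, h'.columnColor_ne_iff hn] at hc
  rcases h with rfl | rfl <;> rcases h' with rfl | rfl <;> simp_all

end Columns

section Vertices

variable {r n m : ℕ}

/-- The vertices on Spoiler's side: the pigeons of a pigeonhole gadget, and the columns in which
Spoiler may place the token of class `u`. -/
inductive SpoilerVertex (r n : ℕ)
  | pigeon (a : Fin (r + 1))
  | column (u : ZMod (3 * r)) (x : ZMod n)
  deriving DecidableEq

/-- The reasons for which Duplicator may decline to answer with a token: none of the tokens on the
board is `j + 1` steps back, or Spoiler has moved to the wrong column although the carry is `b`. -/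
inductive Excuse (r : ℕ)
  | missing (j : Fin r)
  | mismatch (b : Bool)
  deriving DecidableEq, Fintype

/-- Duplicator's answers to a column: a token, completing the column to a digit by `y` and carrying
the incoming carry `b`, or a dodge, whose index `s` matters only against the start position. -/
inductive Answer (r m : ℕ)
  | token (y : ZMod m) (b : Bool)
  | dodge (e : Excuse r) (s : Fin r)
  deriving DecidableEq

/-- The vertices on Duplicator's side: the holes of the pigeonhole gadget, and the answers at class
`u` to a column of color `t`. -/
inductive DuplicatorVertex (r m : ℕ)
  | hole (w : Fin (r + 1))
  | answer (u : ZMod (3 * r)) (t : Fin 3) (c : Answer r m)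
  deriving DecidableEq

/-- A token of class `u` with color `t` may belong to the initial counter value. -/
def IsStart (u : ZMod (3 * r)) (t : Fin 3) : Prop := u.val < r ∧ t = 0

/-- The incoming carry `b` at class `u` is the one that results from the digit just before it, with
column color `t'`, second component `y'` and incoming carry `b'`: the lowest digit always receives a
carry, and otherwise a carry is passed on if counting up has turned the digit into zero. -/
def CarryIn (u : ZMod (3 * r)) (t' : Fin 3) (y' : ZMod m) (b' b : Bool) : Prop :=
  b = true ↔ u.val % r = 0 ∨ (b' = true ∧ t' = 0 ∧ y' = 0)

/-- Adding the carry `b` to a digit with second component `y` moves its column. -/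
def wraps (b : Bool) (y : ZMod m) : Bool := b && decide (y + 1 = 0)

/-- The constraint that the hole `w` puts on the answers at class `u` with color `t`: with the hole
`1` only initial tokens are compatible, and each of the holes `1, …, r` blocks one dodge index. -/
def Answer.FitsHole (w : Fin (r + 1)) (u : ZMod (3 * r)) (t : Fin 3) : Answer r m → Prop
  | token y b => w.val = 1 → IsStart u t ∧ y = 0 ∧ b = true
  | dodge _ s => IsStart u t → s.val + 1 ≠ u.val + w.val

/-- The excuse is valid at class `u` with color `t` in the presence of the token `(t', y', b')` that
lies `d` steps back. -/
def Excuse.Fits (d : ℕ) (u : ZMod (3 * r)) (t' t : Fin 3) (y' : ZMod m) (b' : Bool) :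
    Excuse r → Prop
  | missing j => j.val + 1 ≠ d
  | mismatch b => (d = 1 → CarryIn u t' y' b' b) ∧ (d = r → ¬ (t ≠ t' ↔ wraps b y' = true))

/-- The constraint on the answers at class `u` with color `t` coming from an answer of color `t'`
that lies `d` steps back.  The token `1` step back determines the carry, the token `r` steps back
the digit, and the highest digit must not overflow. -/
def Answer.Compatible (d : ℕ) (u : ZMod (3 * r)) (t' t : Fin 3) : Answer r m → Answer r m → Prop
  | dodge _ _, _ => True
  | token y' b', token y b =>
      (d = 1 → CarryIn u t' y' b' b) ∧
      (d = r → (wraps b y' = true ↔ t ≠ t') ∧ y = y' + b.toNat ∧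
        ¬ (wraps b y' = true ∧ t = 0 ∧ u.val % r + 1 = r))
  | token y' b', dodge e s =>
      e.Fits d u t' t y' b' ∧ (IsStart u t → d ≤ u.val → s.val + 1 ≠ d)

/-- The arcs of Spoiler's graph, directed to the vertex whose answer they constrain: a column is
constrained by all pigeons and by the columns of the `r` preceding classes from which it can follow
in the counter. -/
def SpoilerVertex.Arc : SpoilerVertex r n → SpoilerVertex r n → Prop
  | pigeon a, pigeon a' => a ≠ a'
  | pigeon _, column _ _ => True
  | column v x, column u z => Precedes v u ∧ (gap v u = r → Step x z)
  | column _ _, pigeon _ => False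

/-- The arcs of Duplicator's graph: an answer satisfies the constraint that comes from a hole or
from an answer of one of the `r` preceding classes. -/
def DuplicatorVertex.Arc : DuplicatorVertex r m → DuplicatorVertex r m → Prop
  | hole w, hole w' => w ≠ w'
  | hole w, answer u t c => c.FitsHole w u t
  | answer v t' c', answer u t c => Precedes v u ∧ c'.Compatible (gap v u) u t' t c
  | answer _ _ _, hole _ => False

/-- The vertex colors: the class together with the color of the column, and `none` for pigeons and
holes. -/
abbrev Color (r : ℕ) : Type := Option (ZMod (3 * r) × Fin 3)

/-- Spoiler's graph, in which pebbles are placed on pigeons and columns. -/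
def spoilerGraph (r n : ℕ) : ColoredGraph (SpoilerVertex r n) (Color r) :=
  .ofRel SpoilerVertex.Arc fun
    | .pigeon _ => none
    | .column u x => some (u, columnColor x)

/-- Duplicator's graph, from which the pigeons are answered by holes and the columns by answers. -/
def duplicatorGraph (r m : ℕ) : ColoredGraph (DuplicatorVertex r m) (Color r) :=
  .ofRel DuplicatorVertex.Arc fun
    | .hole _ => none
    | .answer u t _ => some (u, t)

/-- The pairs consisting of a vertex of Spoiler's graph and an answer of Duplicator. -/
abbrev Pebbling (r n m : ℕ) : Type := SpoilerVertex r n × DuplicatorVertex r m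

/-- The positions of the game on `spoilerGraph r n` and `duplicatorGraph r m`. -/
abbrev Position (r n m : ℕ) : Type := Finset (Pebbling r n m)

/-- The two vertices of the pair have the same color. -/
inductive Matched : Pebbling r n m → Prop
  | hole (a : Fin (r + 1)) (w : Fin (r + 1)) : Matched (.pigeon a, .hole w)
  | answer (u : ZMod (3 * r)) (x : ZMod n) (c : Answer r m) :
      Matched (.column u x, .answer u (columnColor x) c)

theorem matched_iff {e : Pebbling r n m} :
    Matched e ↔ (duplicatorGraph r m).color e.2 = (spoilerGraph r n).color e.1 := by
  refine ⟨fun h => by cases h <;> rfl, fun h => ?_⟩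
  obtain ⟨a | ⟨u, x⟩, w | ⟨v, t, c⟩⟩ := e <;> cases h
  · exact .hole a w
  · exact .answer u x c

/-- The pairs `e` and `e'` preserve the arc from the Spoiler vertex of `e` to that of `e'`. -/
def Respects (e e' : Pebbling r n m) : Prop := e.1.Arc e'.1 → e.2.Arc e'.2

theorem SpoilerVertex.Arc.ne {a a' : SpoilerVertex r n} (h : a.Arc a') : a ≠ a' := by
  rintro rfl
  cases a
  · exact h rfl
  · exact not_precedes_self _ h.1

theorem DuplicatorVertex.Arc.ne {b b' : DuplicatorVertex r m} (h : b.Arc b') : b ≠ b' := by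
  rintro rfl
  cases b
  · exact h rfl
  · exact not_precedes_self _ h.1

theorem Matched.respects_of_arc_or [NeZero r] {e e' : Pebbling r n m} (he : Matched e)
    (he' : Matched e') (h : e.1.Arc e'.1 → e.2.Arc e'.2 ∨ e'.2.Arc e.2) : Respects e e' := by
  intro harc
  refine (h harc).elim id fun hrev => ?_
  cases he <;> cases he'
  · exact Ne.symm hrev
  · exact hrev.elim
  · exact harc.elim
  · exact absurd hrev.1 harc.1.asymm

theorem partialHom_iff [NeZero r] {p : Position r n m} :
    PartialHom (spoilerGraph r n) (duplicatorGraph r m) p ↔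
      Functional p ∧ (∀ e ∈ p, Matched e) ∧ ∀ e ∈ p, ∀ e' ∈ p, Respects e e' := by
  refine and_congr_right fun _ => ⟨fun ⟨hcolor, hadj⟩ => ?_, fun ⟨hmatched, harc⟩ => ?_⟩
  · have hmatched : ∀ e ∈ p, Matched e := fun e he => matched_iff.mpr (hcolor he)
    exact ⟨hmatched, fun e he e' he' => (hmatched e he).respects_of_arc_or (hmatched e' he')
      fun h => ((SimpleGraph.fromRel_adj _ _ _).mp (hadj he he' ⟨h.ne, .inl h⟩)).2⟩
  · refine ⟨fun x y h => matched_iff.mp (hmatched _ h), fun x y x' y' h h' hxx' => ?_⟩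
    obtain ⟨-, hxx'⟩ := (SimpleGraph.fromRel_adj _ _ _).mp hxx'
    refine (SimpleGraph.fromRel_adj _ _ _).mpr ?_
    rcases hxx' with hxx' | hxx'
    · have hyy' := harc _ h _ h' hxx'
      exact ⟨hyy'.ne, .inl hyy'⟩
    · have hyy' := harc _ h' _ h hxx'
      exact ⟨hyy'.ne.symm, .inr hyy'⟩

theorem partialHom_insert [NeZero r] {p : Position r n m} {e : Pebbling r n m}
    (hp : PartialHom (spoilerGraph r n) (duplicatorGraph r m) p) (hfresh : ∀ e' ∈ p, e'.1 ≠ e.1)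
    (he : Matched e) (harc : ∀ e' ∈ p, Respects e' e ∧ Respects e e') :
    PartialHom (spoilerGraph r n) (duplicatorGraph r m) (insert e p) := by
  obtain ⟨hfun, hmatched, hrespects⟩ := partialHom_iff.mp hp
  refine partialHom_iff.mpr ⟨fun x y y' h h' => ?_, ?_, ?_⟩
  · rcases Finset.mem_insert.mp h with h | h <;> rcases Finset.mem_insert.mp h' with h' | h'
    · exact congrArg Prod.snd (h.trans h'.symm)
    · exact (hfresh _ h' (congrArg Prod.fst h :)).elim
    · exact (hfresh _ h (congrArg Prod.fst h' :)).elim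
    · exact hfun h h'
  · exact Finset.forall_mem_insert _ _ _ |>.mpr ⟨he, hmatched⟩
  · simp only [Finset.forall_mem_insert]
    exact ⟨⟨fun h => (h.ne rfl).elim, fun e' he' => (harc e' he').2⟩,
      fun e' he' => ⟨(harc e' he').1, hrespects e' he'⟩⟩

end Vertices

/-! ### The counter -/

section Counter

variable (r n m : ℕ)

/-- The counter value at time `u`, which is `u / r`, with its digits below the digit `u % r` cut
off: at time `u` this digit, in base `n * m`, is the one that is being written. -/
def lead (u : ℕ) : ℕ := u / r / (n * m) ^ (u % r)

/-- The incoming carry of the digit written at time `u`. -/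
def carry (u : ℕ) : Bool := decide ((n * m) ^ (u % r) ∣ u / r)

/-- The first component of the digit written at time `u`, which is encoded by Spoiler. -/
def high (u : ℕ) : ZMod n := (lead r n m u / m : ℕ)

/-- The second component of the digit written at time `u`, which is encoded by Duplicator. -/
def low (u : ℕ) : ZMod m := (lead r n m u : ℕ)

/-- The pair of vertices that encodes the digit written at time `u`. -/
def token (u : ℕ) : Pebbling r n m :=
  (.column u (high r n m u),
    .answer u (columnColor (high r n m u)) (.token (low r n m u) (carry r n m u)))

/-- The time at which the counter overflows. -/
def endTime : ℕ := r * (n * m) ^ r + (r - 1)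

variable {r n m}

theorem val_natCast_mod (u : ℕ) : (u : ZMod (3 * r)).val % r = u % r := by
  rw [ZMod.val_natCast, Nat.mod_mul_left_mod]

theorem low_eq_zero_and_high_eq_zero {u : ℕ} :
    low r n m u = 0 ∧ high r n m u = 0 ↔ n * m ∣ lead r n m u := by
  rw [low, high, ZMod.natCast_eq_zero_iff, ZMod.natCast_eq_zero_iff, mul_comm]
  exact ⟨fun ⟨hm, hn⟩ => (Nat.dvd_div_iff_mul_dvd hm).mp hn, fun h =>
    ⟨dvd_of_mul_right_dvd h, (Nat.dvd_div_iff_mul_dvd (dvd_of_mul_right_dvd h)).mpr h⟩⟩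

theorem pow_succ_mod_dvd_iff {u : ℕ} :
    (n * m) ^ (u % r + 1) ∣ u / r ↔
      carry r n m u = true ∧ low r n m u = 0 ∧ high r n m u = 0 := by
  rw [low_eq_zero_and_high_eq_zero, carry, decide_eq_true_eq, lead, pow_succ]
  exact ⟨fun h => ⟨dvd_of_mul_right_dvd h, (Nat.dvd_div_iff_mul_dvd
    (dvd_of_mul_right_dvd h)).mpr h⟩, fun ⟨h, h'⟩ => (Nat.dvd_div_iff_mul_dvd h).mp h'⟩

theorem carry_eq_true_of_lt {u : ℕ} (hu : u < r) : carry r n m u = true := by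
  simp [carry, Nat.div_eq_of_lt hu]

theorem lead_eq_zero_of_lt {u : ℕ} (hu : u < r) : lead r n m u = 0 := by
  simp [lead, Nat.div_eq_of_lt hu]

theorem high_eq_zero_of_lt {u : ℕ} (hu : u < r) : high r n m u = 0 := by
  simp [high, lead_eq_zero_of_lt hu]

theorem low_eq_zero_of_lt {u : ℕ} (hu : u < r) : low r n m u = 0 := by
  simp [low, lead_eq_zero_of_lt hu]

section

variable [NeZero r]

theorem lead_add (u : ℕ) :
    lead r n m (u + r) = lead r n m u + (carry r n m (u + r)).toNat := by
  simp only [lead, carry, Nat.add_mod_right, Nat.add_div_right u (NeZero.pos r), Nat.succ_div]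
  split_ifs with h <;> simp [h]

theorem low_add (u : ℕ) :
    low r n m (u + r) = low r n m u + (carry r n m (u + r)).toNat := by
  rw [low, lead_add, Nat.cast_add, low]

theorem high_add (u : ℕ) :
    high r n m (u + r) = high r n m u + (wraps (carry r n m (u + r)) (low r n m u)).toNat := by
  have hlow : low r n m u + 1 = 0 ↔ m ∣ lead r n m u + 1 := by
    rw [low, ← Nat.cast_add_one, ZMod.natCast_eq_zero_iff]
  rw [high, lead_add, high, wraps]
  cases carry r n m (u + r)
  · simp
  · simp only [Bool.toNat_true, Bool.true_and, Nat.succ_div, hlow]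
    split_ifs with h <;> simp [h]

theorem step_high (u : ℕ) : Step (high r n m u) (high r n m (u + r)) := by
  rw [high_add]
  cases wraps (carry r n m (u + r)) (low r n m u) <;> simp [Step]

theorem columnColor_high_add_ne_iff (hn : 2 ≤ n) {u : ℕ} :
    columnColor (high r n m (u + r)) ≠ columnColor (high r n m u) ↔
      wraps (carry r n m (u + r)) (low r n m u) = true := by
  have : Fact (1 < n) := ⟨hn⟩
  rw [(step_high u).columnColor_ne_iff hn, high_add]
  cases wraps (carry r n m (u + r)) (low r n m u) <;> simp

theorem carryIn_token (u : ℕ) :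
    CarryIn ((u + 1 : ℕ) : ZMod (3 * r)) (columnColor (high r n m u)) (low r n m u)
      (carry r n m u) (carry r n m (u + 1)) := by
  rw [CarryIn, val_natCast_mod, columnColor_eq_zero, and_comm (a := high r n m u = 0),
    ← pow_succ_mod_dvd_iff, carry, decide_eq_true_eq]
  have hmod : (u + 1) % r = (u % r + 1) % r := (Nat.mod_add_mod u r 1).symm
  rcases (Nat.add_one_le_of_lt (Nat.mod_lt u (NeZero.pos r))).eq_or_lt with h | h
  · rw [hmod, h, Nat.mod_self]
    simp
  · rw [Nat.mod_eq_of_lt h] at hmod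
    have hdiv : (u + 1) / r = u / r := Nat.succ_div_of_not_dvd fun hdvd =>
      (hmod.symm.trans (Nat.mod_eq_zero_of_dvd hdvd)).not_gt (Nat.succ_pos _)
    rw [hmod, hdiv]
    simp

theorem wraps_and_high_add_eq_zero {u : ℕ} :
    wraps (carry r n m (u + r)) (low r n m u) = true ∧ high r n m (u + r) = 0 ↔
      (n * m) ^ ((u + r) % r + 1) ∣ (u + r) / r := by
  rw [pow_succ_mod_dvd_iff, low_add, wraps]
  cases carry r n m (u + r) <;> simp

theorem not_overflow_of_lt_endTime {u : ℕ} (h : u + r < endTime r n m) :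
    ¬ (wraps (carry r n m (u + r)) (low r n m u) = true ∧
      columnColor (high r n m (u + r)) = 0 ∧ (u + r) % r + 1 = r) := by
  rw [columnColor_eq_zero, ← and_assoc, wraps_and_high_add_eq_zero]
  rintro ⟨hdvd, hmod⟩
  rw [hmod] at hdvd
  have hpos : 0 < (u + r) / r := Nat.div_pos (Nat.le_add_left r u) (NeZero.pos r)
  have hlt : (u + r) / r < (n * m) ^ r := by
    have hdiv := Nat.div_add_mod (u + r) r
    rw [endTime] at h
    exact lt_of_mul_lt_mul_left (a := r) (by omega) (Nat.zero_le r)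
  exact (Nat.le_of_dvd hpos hdvd).not_gt hlt

theorem overflow_of_eq_endTime {u : ℕ} (h : u + r = endTime r n m) :
    wraps (carry r n m (u + r)) (low r n m u) = true ∧
      columnColor (high r n m (u + r)) = 0 ∧ (u + r) % r + 1 = r := by
  have hr := NeZero.pos r
  have hmod : (u + r) % r + 1 = r := by
    rw [h, endTime, Nat.mul_add_mod, Nat.mod_eq_of_lt (by omega)]
    omega
  have hdiv : (u + r) / r = (n * m) ^ r := by
    rw [h, endTime, Nat.mul_add_div hr, Nat.div_eq_of_lt (by omega), add_zero]
  rw [columnColor_eq_zero, ← and_assoc, wraps_and_high_add_eq_zero, hmod, hdiv]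
  exact ⟨dvd_rfl, rfl⟩

theorem compatible_token (hn : 2 ≤ n) {v u : ℕ} (hu : u < endTime r n m) :
    (Answer.token (r := r) (low r n m v) (carry r n m v)).Compatible (u - v) u
      (columnColor (high r n m v)) (columnColor (high r n m u))
      (.token (low r n m u) (carry r n m u)) := by
  have hr := NeZero.pos r
  refine ⟨fun h => ?_, fun h => ?_⟩
  · obtain rfl : u = v + 1 := by omega
    exact carryIn_token v
  · obtain rfl : u = v + r := by omega
    refine ⟨(columnColor_high_add_ne_iff hn).symm, low_add v, ?_⟩
    rw [val_natCast_mod]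
    exact not_overflow_of_lt_endTime hu

theorem respects_token (hn : 2 ≤ n) {v u : ℕ} (hvu : v ≤ u + r) (huv : u ≤ v + r)
    (hu : u < endTime r n m) : Respects (token r n m v) (token r n m u) := by
  rintro ⟨hprec, -⟩
  have hlt := (precedes_natCast hvu huv).mp hprec
  refine ⟨hprec, ?_⟩
  rw [gap_natCast hlt.le (by omega)]
  exact compatible_token hn hu

theorem eq_of_token_fst_eq {v u : ℕ} (hvu : v ≤ u + r) (huv : u ≤ v + r)
    (h : (token r n m v).1 = (token r n m u).1) : v = u :=
  eq_of_natCast_eq hvu huv (SpoilerVertex.column.inj h).1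

theorem partialHom_image_token (hn : 2 ≤ n) {s : Finset ℕ} (hs : ∀ u ∈ s, ∀ v ∈ s, u ≤ v + r)
    (hend : ∀ u ∈ s, u < endTime r n m) :
    PartialHom (spoilerGraph r n) (duplicatorGraph r m) (s.image (token r n m)) := by
  simp only [partialHom_iff, Finset.forall_mem_image]
  refine ⟨fun x y y' h h' => ?_, fun u _ => .answer _ _ _, fun v hv u hu =>
    respects_token hn (hs v hv u hu) (hs u hu v hv) (hend u hu)⟩
  obtain ⟨u, hu, h⟩ := Finset.mem_image.mp h
  obtain ⟨v, hv, h'⟩ := Finset.mem_image.mp h'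
  obtain rfl : u = v := eq_of_token_fst_eq (hs u hu v hv) (hs v hv u hu)
    ((congrArg Prod.fst h).trans (congrArg Prod.fst h').symm)
  exact congrArg Prod.snd (h.symm.trans h')

end

end Counter

/-! ### Windows of the counter -/

section Window

variable {r n m : ℕ}

/-- The pair `e` is a token of class `v`. -/
def IsTokenAt (v : ZMod (3 * r)) (e : Pebbling r n m) : Prop :=
  ∃ x y b, e = (.column v x, .answer v (columnColor x) (.token y b))

/-- The pair `e` is a token that lies `j + 1` steps before the class `u`. -/
def TokenBefore (u : ZMod (3 * r)) (e : Pebbling r n m) (j : Fin r) : Prop :=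
  ∃ v, IsTokenAt v e ∧ gap v u = j.val + 1

/-- The position `q` consists of one token in each of the `r` classes before `u`, so that it
determines the answer at `u`. -/
def IsWindow (u : ZMod (3 * r)) (q : Position r n m) : Prop :=
  q.card = r ∧ ∀ j : Fin r, ∃ e ∈ q, TokenBefore u e j

variable (r n m) in
/-- The tokens of the counter at the times `j, …, j + r - 1`. -/
def window (j : ℕ) : Position r n m := (Finset.Ico j (j + r)).image (token r n m)

theorem insert_token_window (j : ℕ) :
    insert (token r n m (j + r)) (window r n m j) =
      (Finset.Ico j (j + r + 1)).image (token r n m) := by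
  rw [window, ← Finset.image_insert, Finset.insert_Ico_right_eq_Ico_add_one (by omega)]

theorem isTokenAt_token (u : ℕ) : IsTokenAt (u : ZMod (3 * r)) (token r n m u) :=
  ⟨_, _, _, rfl⟩

theorem IsTokenAt.class_unique {v v' : ZMod (3 * r)} {e : Pebbling r n m} (h : IsTokenAt v e)
    (h' : IsTokenAt v' e) : v = v' := by
  obtain ⟨x, y, b, rfl⟩ := h
  obtain ⟨x', y', b', h'⟩ := h'
  simp only [Prod.mk.injEq, SpoilerVertex.column.injEq] at h'
  exact h'.1.1

theorem tokenBefore_token_iff {u : ZMod (3 * r)} {v : ℕ} {j : Fin r} :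
    TokenBefore u (token r n m v) j ↔ gap (v : ZMod (3 * r)) u = j.val + 1 := by
  refine ⟨fun ⟨v', hv', h⟩ => ?_, fun h => ⟨v, isTokenAt_token v, h⟩⟩
  rwa [(isTokenAt_token v).class_unique hv']

theorem TokenBefore.rightUnique (u : ZMod (3 * r)) :
    Relator.RightUnique (TokenBefore (n := n) (m := m) u) := by
  rintro e j j' ⟨v, hv, h⟩ ⟨v', hv', h'⟩
  obtain rfl := hv.class_unique hv'
  exact Fin.ext (by omega)

theorem IsWindow.exists_tokenBefore {u : ZMod (3 * r)} {q : Position r n m} (h : IsWindow u q)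
    {e : Pebbling r n m} (he : e ∈ q) : ∃ j, TokenBefore u e j :=
  (card_eq_and_forall_exists_rel (TokenBefore.rightUnique u) (by simp [h.1]) h.2).2 e he

variable [NeZero r]

theorem card_window (j : ℕ) : (window r n m j).card = r := by
  rw [window, Finset.card_image_of_injOn, Nat.card_Ico, Nat.add_sub_cancel_left]
  intro u hu v hv huv
  simp only [Finset.coe_Ico, Set.mem_Ico] at hu hv
  exact eq_of_token_fst_eq (by omega) (by omega) (congrArg Prod.fst huv)

theorem IsWindow.exists_eq_window {u : ZMod (3 * r)} {q : Position r n m} (h : IsWindow u q)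
    {s : Finset ℕ} (hs : ∀ v ∈ s, ∀ w ∈ s, v ≤ w + r) (hqs : q ⊆ s.image (token r n m)) :
    ∃ v, Finset.Ico v (v + r) ⊆ s ∧ q = window r n m v ∧ u = (v + r : ℕ) := by
  have hr := NeZero.pos r
  obtain ⟨t, hts, rfl⟩ := Finset.subset_image_iff.mp hqs
  obtain ⟨v, hv, hvu⟩ : ∃ v ∈ t, gap (v : ZMod (3 * r)) u = r := by
    obtain ⟨e, he, hej⟩ := h.2 ⟨r - 1, by omega⟩
    obtain ⟨v, hv, rfl⟩ := Finset.mem_image.mp he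
    exact ⟨v, hv, by rw [tokenBefore_token_iff.mp hej]; dsimp only; omega⟩
  obtain rfl : u = (v + r : ℕ) := by rw [← add_gap v u, hvu, Nat.cast_add]
  have htv : t ⊆ Finset.Ico v (v + r) := by
    intro w hw
    have hwv := hs w (hts hw) v (hts hv)
    have hvw := hs v (hts hv) w (hts hw)
    obtain ⟨j, hj⟩ := h.exists_tokenBefore (Finset.mem_image_of_mem _ hw)
    rw [tokenBefore_token_iff, gap_natCast hwv (by omega)] at hj
    exact Finset.mem_Ico.mpr (by omega)
  obtain rfl : t = Finset.Ico v (v + r) := Finset.eq_of_subset_of_card_le htv <| by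
    rw [Nat.card_Ico, Nat.add_sub_cancel_left, ← h.1]
    exact Finset.card_image_le
  exact ⟨v, hts, rfl, rfl⟩

theorem eq_of_isWindow_window {u : ZMod (3 * r)} {j : ℕ} (h : IsWindow u (window r n m j)) :
    u = (j + r : ℕ) := by
  obtain ⟨v, hsub, -, rfl⟩ := h.exists_eq_window (s := Finset.Ico j (j + r))
    (by simp only [Finset.mem_Ico]; omega) subset_rfl
  have hv := (Finset.Ico_subset_Ico_iff (Nat.lt_add_of_pos_right (NeZero.pos r))).mp hsub
  rw [(by omega : v = j)]

theorem isWindow_window (j : ℕ) : IsWindow ((j + r : ℕ) : ZMod (3 * r)) (window r n m j) := by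
  refine ⟨card_window j, fun i => ⟨token r n m (j + r - (i.val + 1)), ?_, ?_⟩⟩
  · exact Finset.mem_image_of_mem _ (Finset.mem_Ico.mpr (by omega))
  · rw [tokenBefore_token_iff, gap_natCast (by omega) (by omega)]
    omega

theorem window_ne_window_succ (j : ℕ) : window r n m j ≠ window r n m (j + 1) := by
  intro h
  have heq := eq_of_isWindow_window (h ▸ isWindow_window (r := r) (n := n) (m := m) j)
  have := eq_of_natCast_eq (by omega) (by have := NeZero.pos r; omega) heq
  omega

theorem IsWindow.eq_window_or_eq_window_succ {u : ZMod (3 * r)} {q : Position r n m}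
    (h : IsWindow u q) {j : ℕ} (hq : q ⊆ insert (token r n m (j + r)) (window r n m j)) :
    q = window r n m j ∨ q = window r n m (j + 1) := by
  rw [insert_token_window] at hq
  obtain ⟨v, hsub, rfl, -⟩ := h.exists_eq_window (by simp only [Finset.mem_Ico]; omega) hq
  have hv := (Finset.Ico_subset_Ico_iff (Nat.lt_add_of_pos_right (NeZero.pos r))).mp hsub
  rcases (by omega : v = j ∨ v = j + 1) with rfl | rfl
  · exact .inl rfl
  · exact .inr rfl

theorem partialHom_window (hn : 2 ≤ n) {j : ℕ} (hj : j + r ≤ endTime r n m) :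
    PartialHom (spoilerGraph r n) (duplicatorGraph r m) (window r n m j) :=
  partialHom_image_token hn (by simp only [Finset.mem_Ico]; omega)
    (by simp only [Finset.mem_Ico]; omega)

theorem partialHom_insert_window (hn : 2 ≤ n) {j : ℕ} (hj : j + r < endTime r n m) :
    PartialHom (spoilerGraph r n) (duplicatorGraph r m)
      (insert (token r n m (j + r)) (window r n m j)) := by
  rw [insert_token_window]
  exact partialHom_image_token hn (by simp only [Finset.mem_Ico]; omega)
    (by simp only [Finset.mem_Ico]; omega)

end Window

/-! ### Duplicator's critical strategies -/

section Duplicator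

variable {r n m : ℕ}

theorem not_isTokenAt_dodge {v : ZMod (3 * r)} {a : SpoilerVertex r n} {u : ZMod (3 * r)}
    {t : Fin 3} {e : Excuse r} {s : Fin r} :
    ¬ IsTokenAt (n := n) (m := m) v (a, .answer u t (.dodge e s)) := by
  rintro ⟨x, y, b, h⟩
  cases h

theorem not_isTokenAt_hole {v : ZMod (3 * r)} {a : SpoilerVertex r n} {w : Fin (r + 1)} :
    ¬ IsTokenAt (n := n) (m := m) v (a, .hole w) := by
  rintro ⟨x, y, b, h⟩
  cases h

/-- The pebbling of a pigeon with the hole `1`, which only initial tokens are compatible with. -/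
def IsStartGuard (e : Pebbling r n m) : Prop := ∃ a w, e = (.pigeon a, .hole w) ∧ w.val = 1

/-- The pair `e` rules out the dodge index `s` for an answer at class `u` that may belong to the
initial counter value. -/
def BlocksDodge (u : ZMod (3 * r)) (e : Pebbling r n m) (s : Fin r) : Prop :=
  (∃ a w, e = (.pigeon a, .hole w) ∧ s.val + 1 = u.val + w.val) ∨
    (TokenBefore u e s ∧ s.val + 1 ≤ u.val)

theorem BlocksDodge.rightUnique (u : ZMod (3 * r)) :
    Relator.RightUnique (BlocksDodge (n := n) (m := m) u) := by
  rintro e s s' (⟨a, w, rfl, h⟩ | ⟨h, -⟩) (⟨a', w', heq, h'⟩ | ⟨h', -⟩)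
  · cases heq
    exact Fin.ext (by omega)
  · obtain ⟨v, hv, -⟩ := h'
    exact (not_isTokenAt_hole hv).elim
  · obtain ⟨v, hv, -⟩ := h
    subst heq
    exact (not_isTokenAt_hole hv).elim
  · exact TokenBefore.rightUnique u h h'

theorem exists_isStartGuard {u : ZMod (3 * r)} (hu : u.val < r) {g : Position r n m}
    (hblocks : ∀ s, ∃ e ∈ g, BlocksDodge u e s) : ∃ e ∈ g, IsStartGuard e := by
  obtain ⟨e, he, ⟨a, w, rfl, h⟩ | ⟨-, h⟩⟩ := hblocks ⟨u.val, hu⟩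
  · exact ⟨_, he, a, w, rfl, by dsimp only at h; omega⟩
  · dsimp only at h
    omega

variable (r n m) in
/-- Duplicator's strategy of playing the counter honestly up to the window of time `i`: a complete
window may occur in a position only if the counter has passed through it by then. -/
def strategy (i : ℕ) : Set (Position r n m) :=
  {p | PartialHom (spoilerGraph r n) (duplicatorGraph r m) p ∧ p.card ≤ r + 1 ∧
    ∀ q ⊆ p, ∀ u, IsWindow u q → ∃ j ≤ i, q = window r n m j}

theorem insert_mem_strategy {i : ℕ} {g : Position r n m} (hg : g ∈ strategy r n m i)
    (hcard : g.card ≤ r) {e : Pebbling r n m} (he : ∀ v, ¬ IsTokenAt v e)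
    (hhom : PartialHom (spoilerGraph r n) (duplicatorGraph r m) (insert e g)) :
    insert e g ∈ strategy r n m i := by
  refine ⟨hhom, (Finset.card_insert_le _ _).trans (by omega), fun q hq u hwindow => ?_⟩
  refine hg.2.2 q ((Finset.subset_insert_iff_of_notMem fun heq => ?_).mp hq) u hwindow
  obtain ⟨-, v, hv, -⟩ := hwindow.exists_tokenBefore heq
  exact he v hv

variable [NeZero r]

theorem token_val_of_isStart {u : ZMod (3 * r)} {x : ZMod n} (h : IsStart u (columnColor x)) :
    token r n m u.val = (.column u x, .answer u (columnColor x) (.token 0 true)) := by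
  obtain ⟨hu, hx⟩ := h
  obtain rfl := columnColor_eq_zero.mp hx
  simp [token, high_eq_zero_of_lt hu, low_eq_zero_of_lt hu, carry_eq_true_of_lt hu]

theorem IsStartGuard.token_eq {e e' : Pebbling r n m} (he : IsStartGuard e)
    {v : ZMod (3 * r)} (he' : IsTokenAt v e') (h : Respects e e') :
    v.val < r ∧ e' = token r n m v.val := by
  obtain ⟨a, w, rfl, hw⟩ := he
  obtain ⟨x, y, b, rfl⟩ := he'
  obtain ⟨hstart, rfl, rfl⟩ := h trivial hw
  exact ⟨hstart.1, (token_val_of_isStart hstart).symm⟩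

theorem IsStartGuard.eq_window_zero {p : Position r n m}
    (hp : PartialHom (spoilerGraph r n) (duplicatorGraph r m) p) {e : Pebbling r n m}
    (hep : e ∈ p) (he : IsStartGuard e) {u : ZMod (3 * r)} {q : Position r n m} (hqp : q ⊆ p)
    (hq : IsWindow u q) : q = window r n m 0 := by
  obtain ⟨-, -, hrespects⟩ := partialHom_iff.mp hp
  have hsub : q ⊆ (Finset.range r).image (token r n m) := by
    intro e' he'
    obtain ⟨-, v, hv, -⟩ := hq.exists_tokenBefore he'
    obtain ⟨hlt, heq⟩ := he.token_eq hv (hrespects e hep e' (hqp he'))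
    exact Finset.mem_image.mpr ⟨v.val, Finset.mem_range.mpr hlt, heq.symm⟩
  obtain ⟨v, hsub', rfl, -⟩ := hq.exists_eq_window
    (by simp only [Finset.mem_range]; omega) hsub
  rw [Finset.range_eq_Ico, Finset.Ico_subset_Ico_iff
    (Nat.lt_add_of_pos_right (NeZero.pos r))] at hsub'
  rw [(by omega : v = 0)]

theorem window_mem_strategy (hn : 2 ≤ n) {i j : ℕ} (hji : j ≤ i) (hj : j + r ≤ endTime r n m) :
    window r n m j ∈ strategy r n m i := by
  refine ⟨partialHom_window hn hj, by simp [card_window], fun q hq u hwindow => ⟨j, hji, ?_⟩⟩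
  exact Finset.eq_of_subset_of_card_le hq (by rw [hwindow.1, card_window])

theorem exists_insert_pigeon_mem_strategy {i : ℕ} {g : Position r n m}
    (hg : g ∈ strategy r n m i) (hcard : g.card ≤ r) {a : Fin (r + 1)}
    (hfresh : ∀ e ∈ g, e.1 ≠ .pigeon a) : ∃ b, insert (.pigeon a, b) g ∈ strategy r n m i := by
  have hunique : Relator.RightUnique fun (e : Pebbling r n m) (w : Fin (r + 1)) =>
      ¬ (DuplicatorVertex.hole w).Arc e.2 := by
    rintro ⟨a', w₀ | ⟨u, t, ⟨y, b⟩ | ⟨e, s⟩⟩⟩ w w' h h' <;>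
      simp only [DuplicatorVertex.Arc, Answer.FitsHole, Classical.not_imp, not_not] at h h'
    · exact h.trans h'.symm
    · exact Fin.ext (h.1.trans h'.1.symm)
    · exact Fin.ext (by omega)
  obtain ⟨w, hw⟩ := exists_forall_not_rel_of_card_lt hunique (g := g)
    (by rw [Fintype.card_fin]; omega)
  simp only [not_not] at hw
  refine ⟨.hole w, insert_mem_strategy hg hcard (fun _ => not_isTokenAt_hole)
    (partialHom_insert hg.1 hfresh (.hole a w) fun e he => ?_)⟩
  have harc := hw e he
  cases (partialHom_iff.mp hg.1).2.1 e he with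
  | hole a' w' => exact ⟨fun _ => Ne.symm harc, fun _ => harc⟩
  | answer u x c => exact ⟨fun h => h.elim, fun _ => harc⟩

theorem exists_insert_dodge_mem_strategy {i : ℕ} {g : Position r n m}
    (hg : g ∈ strategy r n m i) (hcard : g.card ≤ r) {u : ZMod (3 * r)} {z : ZMod n}
    (hfresh : ∀ e ∈ g, e.1 ≠ .column u z) {s : Fin r}
    (hs : IsStart u (columnColor z) → ∀ e ∈ g, ¬ BlocksDodge u e s) (e : Excuse r)
    (he : ∀ v x y b, (.column v x, .answer v (columnColor x) (.token y b)) ∈ g →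
      SpoilerVertex.Arc (.column v x) (.column u z) →
      e.Fits (gap v u) u (columnColor x) (columnColor z) y b) :
    ∃ b, insert (.column u z, b) g ∈ strategy r n m i := by
  refine ⟨.answer u (columnColor z) (.dodge e s), insert_mem_strategy hg hcard
    (fun _ => not_isTokenAt_dodge) (partialHom_insert hg.1 hfresh (.answer u z _) fun e' he' => ?_)⟩
  cases (partialHom_iff.mp hg.1).2.1 e' he' with
  | hole a w => exact ⟨fun _ hstart h => hs hstart _ he' (.inl ⟨a, w, rfl, h⟩), fun h => h.elim⟩
  | answer v x c =>
    refine ⟨fun harc => ⟨harc.1, ?_⟩, fun harc => ⟨harc.1, trivial⟩⟩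
    rcases c with ⟨y, b⟩ | ⟨e', s'⟩
    · exact ⟨he v x y b he' harc, fun hstart hle h => hs hstart _ he'
        (.inr ⟨⟨v, ⟨x, y, b, rfl⟩, h.symm⟩, h ▸ hle⟩)⟩
    · trivial

theorem insert_initial_mem_strategy (hn : 2 ≤ n) (hend : r ≤ endTime r n m) {i : ℕ}
    {g : Position r n m} (hg : g ∈ strategy r n m i) (hcard : g.card ≤ r) {u : ℕ} (hu : u < r)
    (hfresh : ∀ e ∈ g, e.1 ≠ (token r n m u).1)
    (hblocks : ∀ s, ∃ e ∈ g, BlocksDodge (u : ZMod (3 * r)) e s) :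
    insert (token r n m u) g ∈ strategy r n m i := by
  have hval : (u : ZMod (3 * r)).val = u := ZMod.val_cast_of_lt (by omega)
  obtain ⟨e₀, he₀, hguard⟩ := exists_isStartGuard (hval.trans_lt hu) hblocks
  obtain ⟨-, -, hrespects⟩ := partialHom_iff.mp hg.1
  have hall := (card_eq_and_forall_exists_rel (BlocksDodge.rightUnique u)
    (by simpa using hcard) hblocks).2
  have hhom : PartialHom (spoilerGraph r n) (duplicatorGraph r m) (insert (token r n m u) g) := by
    refine partialHom_insert hg.1 hfresh (.answer _ _ _) fun e he => ?_
    obtain ⟨s, ⟨a, w, rfl, -⟩ | ⟨⟨v, hv, -⟩, -⟩⟩ := hall e he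
    · refine ⟨fun _ _ => ⟨⟨hval.trans_lt hu, ?_⟩, low_eq_zero_of_lt hu, carry_eq_true_of_lt hu⟩,
        fun h => h.elim⟩
      rw [high_eq_zero_of_lt hu, columnColor_eq_zero.mpr rfl]
    · obtain ⟨hlt, rfl⟩ := hguard.token_eq hv (hrespects e₀ he₀ e he)
      exact ⟨respects_token hn (by omega) (by omega) (by omega),
        respects_token hn (by omega) (by omega) (by omega)⟩
  exact ⟨hhom, (Finset.card_insert_le _ _).trans (by omega), fun q hq u' hwindow =>
    ⟨0, i.zero_le, hguard.eq_window_zero hhom (Finset.mem_insert_of_mem he₀) hq hwindow⟩⟩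

theorem insert_token_mem_strategy (hn : 2 ≤ n) {i j : ℕ} (hji : j < i)
    (hj : j + r < endTime r n m) :
    insert (token r n m (j + r)) (window r n m j) ∈ strategy r n m i := by
  refine ⟨partialHom_insert_window hn hj,
    (Finset.card_insert_le _ _).trans (by rw [card_window]), fun q hq u hwindow => ?_⟩
  rcases hwindow.eq_window_or_eq_window_succ hq with rfl | rfl
  · exact ⟨j, hji.le, rfl⟩
  · exact ⟨j + 1, hji, rfl⟩

theorem mismatch_fits_of_ne_high (hn : 2 ≤ n) {j : ℕ} {z : ZMod n} (hz : z ≠ high r n m (j + r))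
    {v : ZMod (3 * r)} {x : ZMod n} {y : ZMod m} {b : Bool}
    (hmem : (.column v x, .answer v (columnColor x) (.token y b)) ∈ window r n m j)
    (harc : SpoilerVertex.Arc (.column v x) (.column (j + r : ℕ) z)) :
    (Excuse.mismatch (r := r) (carry r n m (j + r))).Fits (gap v (j + r : ℕ)) (j + r : ℕ)
      (columnColor x) (columnColor z) y b := by
  have hr := NeZero.pos r
  obtain ⟨w, hw, heq⟩ := Finset.mem_image.mp hmem
  rw [Finset.mem_Ico] at hw
  cases heq
  rw [gap_natCast (by omega) (by omega)]
  refine ⟨fun h => ?_, fun h hwraps => hz ?_⟩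
  · rw [(by omega : j + r = w + 1)]
    exact carryIn_token w
  · obtain rfl : w = j := by omega
    rw [← columnColor_high_add_ne_iff hn] at hwraps
    exact (harc.2 (by rw [gap_natCast (by omega) (by omega), h])).eq_of_columnColor_ne_iff hn
      (step_high w) hwraps

theorem exists_insert_column_mem_strategy_of_window (hn : 2 ≤ n) {i : ℕ}
    (hi : i + r ≤ endTime r n m) {g : Position r n m} (hg : g ∈ strategy r n m i)
    (hcrit : g ≠ window r n m i) (hcard : g.card ≤ r) {u : ZMod (3 * r)} {z : ZMod n}
    (hfresh : ∀ e ∈ g, e.1 ≠ .column u z) {s : Fin r}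
    (hs : IsStart u (columnColor z) → ∀ e ∈ g, ¬ BlocksDodge u e s)
    (hwindow : ∀ j, ∃ e ∈ g, TokenBefore u e j) :
    ∃ b, insert (.column u z, b) g ∈ strategy r n m i := by
  have hcard' := (card_eq_and_forall_exists_rel (TokenBefore.rightUnique u)
    (by simpa using hcard) hwindow).1
  rw [Fintype.card_fin] at hcard'
  obtain ⟨j, hji, rfl⟩ := hg.2.2 g subset_rfl u ⟨hcard', hwindow⟩
  obtain rfl := eq_of_isWindow_window ⟨hcard', hwindow⟩
  have hji' : j < i := hji.lt_of_ne fun h => hcrit (h ▸ rfl)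
  by_cases hz : z = high r n m (j + r)
  · subst hz
    exact ⟨_, insert_token_mem_strategy hn hji' (by omega)⟩
  · exact exists_insert_dodge_mem_strategy hg hcard hfresh hs (.mismatch (carry r n m (j + r)))
      fun v x y b hmem harc => mismatch_fits_of_ne_high hn hz hmem harc

theorem exists_insert_mem_strategy (hn : 2 ≤ n) {i : ℕ} (hi : i + r ≤ endTime r n m)
    {g : Position r n m} (hg : g ∈ strategy r n m i) (hcrit : g ≠ window r n m i)
    (hcard : g.card ≤ r) (a : SpoilerVertex r n) :
    ∃ b, insert (a, b) g ∈ strategy r n m i := by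
  by_cases hfresh : ∃ e ∈ g, e.1 = a
  · obtain ⟨e, he, rfl⟩ := hfresh
    exact ⟨e.2, by rwa [Finset.insert_eq_of_mem he]⟩
  push Not at hfresh
  obtain a | ⟨u, z⟩ := a
  · exact exists_insert_pigeon_mem_strategy hg hcard hfresh
  by_cases hstart : IsStart u (columnColor z) ∧ ∀ s, ∃ e ∈ g, BlocksDodge u e s
  · obtain ⟨hstart, hblocks⟩ := hstart
    have htoken := token_val_of_isStart (m := m) hstart
    rw [← ZMod.natCast_zmod_val u] at hblocks
    have := insert_initial_mem_strategy hn (by omega) hg hcard hstart.1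
      (by rwa [htoken]) hblocks
    exact ⟨_, htoken ▸ this⟩
  obtain ⟨s, hs⟩ : ∃ s, IsStart u (columnColor z) → ∀ e ∈ g, ¬ BlocksDodge u e s := by
    by_cases h : IsStart u (columnColor z)
    · simpa [h] using hstart
    · exact ⟨⟨0, NeZero.pos r⟩, fun h' => absurd h' h⟩
  by_cases hwindow : ∀ j, ∃ e ∈ g, TokenBefore u e j
  · exact exists_insert_column_mem_strategy_of_window hn hi hg hcrit hcard hfresh hs hwindow
  · push Not at hwindow
    obtain ⟨j, hj⟩ := hwindow
    exact exists_insert_dodge_mem_strategy hg hcard hfresh hs (.missing j)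
      fun v x y b he _ h => hj _ he ⟨v, ⟨x, y, b, rfl⟩, h.symm⟩

theorem isCriticalStrategy_strategy (hn : 2 ≤ n) {i : ℕ} (hi : i + r ≤ endTime r n m) :
    IsCriticalStrategy (spoilerGraph r n) (duplicatorGraph r m) Set.univ Set.univ (r + 1)
      (strategy r n m i) {window r n m i} where
  nonempty := ⟨_, window_mem_strategy hn le_rfl hi⟩
  crit_subset := Set.singleton_subset_iff.mpr (window_mem_strategy hn le_rfl hi)
  mem_SD _ _ _ _ := ⟨trivial, trivial⟩
  isHom _ hp := hp.1
  crit_card := by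
    rintro p rfl
    rw [card_window, Nat.add_sub_cancel]
  downward p hp q hqp := ⟨hp.1.mono hqp, (Finset.card_le_card hqp).trans hp.2.1,
    fun q' hq' => hp.2.2 q' (hq'.trans hqp)⟩
  extend g hg hcrit hcard a _ := by
    obtain ⟨b, hb⟩ := exists_insert_mem_strategy hn hi hg hcrit (by omega) a
    exact ⟨b, trivial, hb⟩

theorem singleton_window_subset (hn : 2 ≤ n) {i : ℕ} (hi : i + r ≤ endTime r n m) :
    {window r n m i} ⊆ strategy r n m (i + 1) \ {window r n m (i + 1)} :=
  Set.singleton_subset_iff.mpr ⟨window_mem_strategy hn i.le_succ hi, window_ne_window_succ i⟩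

end Duplicator

/-! ### Spoiler's winning strategy -/

section Spoiler

variable {r n m : ℕ}

theorem CarryIn.right_unique {u : ZMod (3 * r)} {t' : Fin 3} {y' : ZMod m} {b' b c : Bool}
    (h : CarryIn u t' y' b' b) (h' : CarryIn u t' y' b' c) : b = c :=
  Bool.eq_iff_iff.mpr (h.trans h'.symm)

theorem Matched.exists_eq_hole {a : Fin (r + 1)} {b : DuplicatorVertex r m}
    (h : Matched ((.pigeon a, b) : Pebbling r n m)) : ∃ w, b = .hole w := by
  cases h with
  | hole _ w => exact ⟨w, rfl⟩

variable (r n m) in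
/-- The position from which Spoiler builds up the first window: the first `i` tokens are in place,
and for `1 ≤ w ≤ r - i` the pigeon `σ w` sits in the hole `w`. -/
def startPosition (σ : ℕ → Fin (r + 1)) (i : ℕ) : Position r n m :=
  (Finset.Icc 1 (r - i)).image (fun w : ℕ => (.pigeon (σ w), .hole (Fin.ofNat (r + 1) w))) ∪
    (Finset.range i).image (token r n m)

theorem card_startPosition_le (σ : ℕ → Fin (r + 1)) {i : ℕ} (hi : i ≤ r) :
    (startPosition r n m σ i).card ≤ r :=
  calc
    (startPosition r n m σ i).card ≤ (Finset.Icc 1 (r - i)).card + (Finset.range i).card :=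
      (Finset.card_union_le _ _).trans (add_le_add Finset.card_image_le Finset.card_image_le)
    _ = r := by rw [Nat.card_Icc, Finset.card_range]; omega

theorem startPosition_succ_subset (σ : ℕ → Fin (r + 1)) (i : ℕ) :
    startPosition r n m σ (i + 1) ⊆ insert (token r n m i) (startPosition r n m σ i) := by
  rw [startPosition, startPosition, Finset.range_add_one, Finset.image_insert,
    ← Finset.union_insert]
  exact Finset.union_subset_union (Finset.image_subset_image (Finset.Icc_subset_Icc_right
    (by omega))) subset_rfl

theorem window_zero_subset_startPosition (σ : ℕ → Fin (r + 1)) :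
    window r n m 0 ⊆ startPosition r n m σ r := by
  rw [window, zero_add, ← Finset.range_eq_Ico]
  exact Finset.subset_union_right

variable [NeZero r]

theorem compatible_of_respects_token {v u : ℕ} (hvu : v < u) (huv : u ≤ v + r)
    {c : Answer r m}
    (h : Respects (token r n m v)
      (.column u (high r n m u), .answer u (columnColor (high r n m u)) c)) :
    (Answer.token (low r n m v) (carry r n m v)).Compatible (u - v) u
      (columnColor (high r n m v)) (columnColor (high r n m u)) c := by
  have hgap : gap (v : ZMod (3 * r)) u = u - v := gap_natCast hvu.le (by omega)
  rw [← hgap]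
  refine (h ⟨(precedes_natCast (by omega) huv).mpr hvu, fun h => ?_⟩).2
  obtain rfl : u = v + r := by omega
  exact step_high v

theorem eq_token_of_partialHom_insert_window (hn : 2 ≤ n) {j : ℕ} {b : DuplicatorVertex r m}
    (h : PartialHom (spoilerGraph r n) (duplicatorGraph r m)
      (insert ((token r n m (j + r)).1, b) (window r n m j))) :
    b = (token r n m (j + r)).2 ∧ j + r ≠ endTime r n m := by
  have hr := NeZero.pos r
  obtain ⟨-, hmatched, hrespects⟩ := partialHom_iff.mp h
  have hb : Matched ((token r n m (j + r)).1, b) := hmatched _ (Finset.mem_insert_self _ _)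
  obtain - | ⟨-, -, c⟩ := hb
  have hcompat : ∀ v ∈ Finset.Ico j (j + r), _ := fun v hv =>
    compatible_of_respects_token (Finset.mem_Ico.mp hv).2
      (by have := (Finset.mem_Ico.mp hv).1; omega)
      (hrespects _ (Finset.mem_insert_of_mem (Finset.mem_image_of_mem _ hv)) _
        (Finset.mem_insert_self _ _))
  have hlast := hcompat (j + r - 1) (Finset.mem_Ico.mpr (by omega))
  have hfirst := hcompat j (Finset.mem_Ico.mpr (by omega))
  have hcarry := carryIn_token (r := r) (n := n) (m := m) (j + r - 1)
  rw [Nat.sub_add_cancel (by omega)] at hcarry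
  rw [Nat.add_sub_cancel_left] at hfirst
  obtain ⟨y, b⟩ | ⟨i | b, s⟩ := c
  · obtain rfl := (hlast.1 (by omega)).right_unique hcarry
    obtain ⟨-, rfl, hend⟩ := hfirst.2 rfl
    refine ⟨by rw [token, low_add], fun h => hend ?_⟩
    rw [val_natCast_mod]
    exact overflow_of_eq_endTime h
  · exact ((hcompat (j + r - (i.val + 1)) (Finset.mem_Ico.mpr (by omega))).1 (by omega)).elim
  · obtain rfl := (hlast.1.1 (by omega)).right_unique hcarry
    exact (hfirst.1.2 rfl (columnColor_high_add_ne_iff hn)).elim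

theorem spoilerWins_window_of_succ (hn : 2 ≤ n) {j : ℕ}
    (h : j + r ≠ endTime r n m → SpoilerWins (spoilerGraph r n) (duplicatorGraph r m)
      Set.univ Set.univ (r + 1) (window r n m (j + 1))) :
    SpoilerWins (spoilerGraph r n) (duplicatorGraph r m) Set.univ Set.univ (r + 1)
      (window r n m j) := by
  refine .of_forall_insert (by rw [card_window]; omega)
    (Set.mem_univ (token r n m (j + r)).1) fun b _ hhom => ?_
  obtain ⟨rfl, hend⟩ := eq_token_of_partialHom_insert_window hn hhom
  refine (h hend).mono ((insert_token_window j).symm ▸ ?_)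
  exact Finset.image_subset_image (Finset.Ico_subset_Ico (by omega) (by omega))

theorem spoilerWins_window (hn : 2 ≤ n) {j : ℕ} (hj : j + r ≤ endTime r n m) :
    SpoilerWins (spoilerGraph r n) (duplicatorGraph r m) Set.univ Set.univ (r + 1)
      (window r n m j) :=
  Nat.decreasingInduction (fun _ _ hwins => spoilerWins_window_of_succ hn fun _ => hwins)
    (spoilerWins_window_of_succ hn fun h => (h (Nat.sub_add_cancel (by omega))).elim)
    (Nat.le_sub_of_add_le hj)

theorem eq_token_of_partialHom_insert_startPosition {σ : ℕ → Fin (r + 1)} {i : ℕ} (hi : i < r)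
    {b : DuplicatorVertex r m} (h : PartialHom (spoilerGraph r n) (duplicatorGraph r m)
      (insert ((token r n m i).1, b) (startPosition r n m σ i))) :
    b = (token r n m i).2 := by
  obtain ⟨-, hmatched, hrespects⟩ := partialHom_iff.mp h
  have hb : Matched ((token r n m i).1, b) := hmatched _ (Finset.mem_insert_self _ _)
  have hval : (i : ZMod (3 * r)).val = i := ZMod.val_cast_of_lt (by omega)
  have hstart : IsStart (i : ZMod (3 * r)) (columnColor (high r n m i)) :=
    ⟨hval.trans_lt hi, columnColor_eq_zero.mpr (high_eq_zero_of_lt hi)⟩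
  have hhole : ∀ w ∈ Finset.Icc 1 (r - i),
      Respects (.pigeon (σ w), .hole (Fin.ofNat (r + 1) w)) ((token r n m i).1, b) := fun w hw =>
    hrespects _ (Finset.mem_insert_of_mem (Finset.mem_union_left _
      (Finset.mem_image_of_mem _ hw))) _ (Finset.mem_insert_self _ _)
  have hguard : IsStartGuard
      ((.pigeon (σ 1), .hole (Fin.ofNat (r + 1) 1)) : Pebbling r n m) :=
    ⟨_, _, rfl, Nat.mod_eq_of_lt (by omega)⟩
  obtain - | ⟨-, -, ⟨y, b⟩ | ⟨e, s⟩⟩ := hb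
  · obtain ⟨-, heq⟩ := hguard.token_eq ⟨_, _, _, rfl⟩ (hhole 1 (Finset.mem_Icc.mpr (by omega)))
    rw [hval] at heq
    exact congrArg Prod.snd heq
  · exfalso
    rcases lt_or_ge s.val i with hs | hs
    · have hcompat := compatible_of_respects_token (v := i - (s.val + 1)) (by omega) (by omega)
        (hrespects _ (Finset.mem_insert_of_mem (Finset.mem_union_right _
          (Finset.mem_image_of_mem _ (Finset.mem_range.mpr (by omega))))) _
          (Finset.mem_insert_self _ _))
      exact hcompat.2 hstart (by omega) (by omega)
    · refine hhole (s.val + 1 - i) (Finset.mem_Icc.mpr (by omega)) trivial hstart ?_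
      rw [hval, Fin.val_ofNat, Nat.mod_eq_of_lt (by omega)]
      omega

theorem spoilerWins_startPosition (hn : 2 ≤ n) (hend : r ≤ endTime r n m) (σ : ℕ → Fin (r + 1)) :
    SpoilerWins (spoilerGraph r n) (duplicatorGraph r m) Set.univ Set.univ (r + 1)
      (startPosition r n m σ 0) := by
  refine Nat.decreasingInduction (fun i hi hwins => ?_) ((spoilerWins_window hn (j := 0)
    (by omega)).mono (window_zero_subset_startPosition σ)) r.zero_le
  refine .of_forall_insert (Nat.lt_add_one_of_le (card_startPosition_le σ (by omega)))
    (Set.mem_univ (token r n m i).1) fun b _ hhom => ?_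
  obtain rfl := eq_token_of_partialHom_insert_startPosition hi hhom
  exact hwins.mono (startPosition_succ_subset σ i)

theorem exists_startPosition_subset {f : SpoilerVertex r n → DuplicatorVertex r m}
    (h : PartialHom (spoilerGraph r n) (duplicatorGraph r m)
      ((Finset.univ.image SpoilerVertex.pigeon).image fun a => (a, f a))) :
    ∃ σ, startPosition r n m σ 0 ⊆
      (Finset.univ.image SpoilerVertex.pigeon).image fun a => (a, f a) := by
  have hmem : ∀ a, (.pigeon a, f (.pigeon a)) ∈
      (Finset.univ.image (SpoilerVertex.pigeon (n := n))).image fun a => (a, f a) := fun a =>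
    Finset.mem_image_of_mem (fun a => (a, f a))
      (Finset.mem_image_of_mem _ (Finset.mem_univ a))
  obtain ⟨-, hmatched, hrespects⟩ := partialHom_iff.mp h
  choose w hw using fun a => (hmatched _ (hmem a)).exists_eq_hole
  have hinj : Function.Injective w := fun a a' heq => by
    by_contra hne
    have := hrespects _ (hmem a) _ (hmem a') hne
    simp only [hw, heq] at this
    exact this rfl
  obtain ⟨σ, hσ⟩ := (Finite.surjective_of_injective hinj).hasRightInverse
  refine ⟨fun v => σ (Fin.ofNat (r + 1) v), ?_⟩
  rw [startPosition, Finset.range_zero, Finset.image_empty, Finset.union_empty]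
  refine Finset.image_subset_iff.mpr fun v _ => ?_
  simpa only [hw, hσ (Fin.ofNat (r + 1) v)] using hmem (σ (Fin.ofNat (r + 1) v))

theorem spoilerWins_empty (hn : 2 ≤ n) (hend : r ≤ endTime r n m) :
    SpoilerWins (spoilerGraph r n) (duplicatorGraph r m) Set.univ Set.univ (r + 1) ∅ := by
  have : Nonempty (DuplicatorVertex r m) := ⟨.hole 0⟩
  refine .of_forall_graph (s := Finset.univ.image SpoilerVertex.pigeon)
    (Finset.card_image_le.trans (by simp)) (fun _ _ => Set.mem_univ _) fun f _ => ?_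
  by_cases h : PartialHom (spoilerGraph r n) (duplicatorGraph r m)
      ((Finset.univ.image SpoilerVertex.pigeon).image fun a => (a, f a))
  · obtain ⟨σ, hσ⟩ := exists_startPosition_subset h
    exact (spoilerWins_startPosition hn hend σ).mono hσ
  · exact .win h

end Spoiler

/-! ### The size of the graphs and the number of strategies -/

section Size

variable {r n m : ℕ}

/-- The vertices of Spoiler's graph as a disjoint union of a row of pigeons and a grid. -/
def spoilerVertexEquiv : SpoilerVertex r n ≃ Fin (r + 1) ⊕ ZMod (3 * r) × ZMod n where
  toFun
    | .pigeon a => .inl a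
    | .column u x => .inr (u, x)
  invFun := Sum.elim .pigeon fun p => .column p.1 p.2
  left_inv a := by cases a <;> rfl
  right_inv a := by rcases a with a | ⟨u, x⟩ <;> rfl

/-- The answers as a disjoint union of the tokens and the dodges. -/
def answerEquiv : Answer r m ≃ ZMod m × Bool ⊕ Excuse r × Fin r where
  toFun
    | .token y b => .inl (y, b)
    | .dodge e s => .inr (e, s)
  invFun := Sum.elim (fun p => .token p.1 p.2) fun p => .dodge p.1 p.2
  left_inv c := by cases c <;> rfl
  right_inv c := by rcases c with ⟨y, b⟩ | ⟨e, s⟩ <;> rfl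

/-- The vertices of Duplicator's graph as a disjoint union of the holes and the answers. -/
def duplicatorVertexEquiv :
    DuplicatorVertex r m ≃ Fin (r + 1) ⊕ ZMod (3 * r) × Fin 3 × Answer r m where
  toFun
    | .hole w => .inl w
    | .answer u t c => .inr (u, t, c)
  invFun := Sum.elim .hole fun p => .answer p.1 p.2.1 p.2.2
  left_inv b := by cases b <;> rfl
  right_inv b := by rcases b with w | ⟨u, t, c⟩ <;> rfl

instance [NeZero r] [NeZero n] : Fintype (SpoilerVertex r n) := .ofEquiv _ spoilerVertexEquiv.symm

instance [NeZero m] : Fintype (Answer r m) := .ofEquiv _ answerEquiv.symm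

instance [NeZero r] [NeZero m] : Fintype (DuplicatorVertex r m) :=
  .ofEquiv _ duplicatorVertexEquiv.symm

variable [NeZero r]

theorem card_spoilerVertex [NeZero n] : Fintype.card (SpoilerVertex r n) = r + 1 + 3 * r * n := by
  simp [Fintype.card_congr spoilerVertexEquiv, ZMod.card]

theorem card_duplicatorVertex [NeZero m] : Fintype.card (DuplicatorVertex r m) =
    r + 1 + 3 * r * (3 * (m * 2 + Fintype.card (Excuse r) * r)) := by
  simp [Fintype.card_congr duplicatorVertexEquiv, Fintype.card_congr answerEquiv, ZMod.card]

theorem card_spoilerVertex_le [NeZero n] :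
    Fintype.card (SpoilerVertex r n) ≤ (r + 1 + 3 * r) * n :=
  calc
    Fintype.card (SpoilerVertex r n) = (r + 1) * 1 + 3 * r * n := by rw [card_spoilerVertex]; ring
    _ ≤ (r + 1) * n + 3 * r * n := by gcongr; exact NeZero.one_le
    _ = (r + 1 + 3 * r) * n := by ring

theorem card_duplicatorVertex_le [NeZero m] : Fintype.card (DuplicatorVertex r m) ≤
    (r + 1 + 3 * r * (3 * (2 + Fintype.card (Excuse r) * r))) * m :=
  calc
    Fintype.card (DuplicatorVertex r m) =
        (r + 1) * 1 + 3 * r * (3 * (m * 2 + Fintype.card (Excuse r) * r * 1)) := by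
      rw [card_duplicatorVertex]; ring
    _ ≤ (r + 1) * m + 3 * r * (3 * (m * 2 + Fintype.card (Excuse r) * r * m)) := by
      gcongr <;> exact NeZero.one_le
    _ = (r + 1 + 3 * r * (3 * (2 + Fintype.card (Excuse r) * r))) * m := by ring

theorem exists_card_le_mul (r : ℕ) [NeZero r] : ∃ c : ℝ, 0 < c ∧ ∀ (n m : ℕ) [NeZero n] [NeZero m],
    (Fintype.card (SpoilerVertex r n) : ℝ) ≤ c * n ∧
      (Fintype.card (DuplicatorVertex r m) : ℝ) ≤ c * m := by
  refine ⟨((r + 1 + 3 * r) + (r + 1 + 3 * r * (3 * (2 + Fintype.card (Excuse r) * r))) : ℕ),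
    by positivity, fun n m _ _ => ⟨?_, ?_⟩⟩
  · exact_mod_cast card_spoilerVertex_le.trans (Nat.mul_le_mul_right n (Nat.le_add_right _ _))
  · exact_mod_cast card_duplicatorVertex_le.trans (Nat.mul_le_mul_right m (Nat.le_add_left _ _))

end Size

theorem two_mul_add_le_endTime {r : ℕ} (hr : 2 ≤ r) (n m : ℕ) :
    2 * (n ^ r * m ^ r) + (r - 1) ≤ endTime r n m := by
  rw [endTime, ← mul_pow]
  gcongr

end PebbleCounter

open PebbleCounter

/-- for every `k ≥ 3` there are a constant `c > 0` and `n₀, m₀ ≥ 1` such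
that for all `n ≥ n₀`, `m ≥ m₀` there exist finite vertex-colored graphs `A` and `B`
with `|V(A)| ≤ c·n` and `|V(B)| ≤ c·m` such that Spoiler has a winning strategy in the
existential `k`-pebble game on `A` and `B`, and, setting `N = n^(k-1)·m^(k-1)`,
Duplicator has critical strategies `G^start, F_1, G_1, …, G_{N-2}, F_{N-1}` with
`crit(G^start) ⊆ F_1 ∖ crit(F_1)`,
`crit(G_i) ⊆ (F_{i+1} ∖ crit(F_{i+1})) ∪ (G^start ∖ crit(G^start))` and
`crit(F_i) ⊆ (G_i ∖ crit(G_i)) ∪ (G^start ∖ crit(G^start))` for `1 ≤ i ≤ N-2`. -/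
theorem critical_strategy_sequence_exists (k : ℕ) (hk : 3 ≤ k) :
    ∃ c : ℝ, 0 < c ∧ ∃ n₀ m₀ : ℕ, 0 < n₀ ∧ 0 < m₀ ∧
      ∀ n m : ℕ, n₀ ≤ n → m₀ ≤ m →
        ∃ (V₁ V₂ C : Type) (_ : Fintype V₁) (_ : Fintype V₂)
          (_ : DecidableEq V₁) (_ : DecidableEq V₂)
          (A : ColoredGraph V₁ C) (B : ColoredGraph V₂ C),
          (Fintype.card V₁ : ℝ) ≤ c * n ∧ (Fintype.card V₂ : ℝ) ≤ c * m ∧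
          PebbleCG.SpoilerWins A B Set.univ Set.univ k (∅ : Finset (V₁ × V₂)) ∧
          ∃ (GsH GsC : Set (Finset (V₁ × V₂)))
            (FH FC GH GC : ℕ → Set (Finset (V₁ × V₂))),
            PebbleCG.IsCriticalStrategy A B Set.univ Set.univ k GsH GsC ∧
            (∀ i, 1 ≤ i → i ≤ n ^ (k - 1) * m ^ (k - 1) - 1 →
              PebbleCG.IsCriticalStrategy A B Set.univ Set.univ k (FH i) (FC i)) ∧
            (∀ i, 1 ≤ i → i ≤ n ^ (k - 1) * m ^ (k - 1) - 2 →
              PebbleCG.IsCriticalStrategy A B Set.univ Set.univ k (GH i) (GC i)) ∧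
            GsC ⊆ FH 1 \ FC 1 ∧
            (∀ i, 1 ≤ i → i ≤ n ^ (k - 1) * m ^ (k - 1) - 2 →
              GC i ⊆ (FH (i + 1) \ FC (i + 1)) ∪ (GsH \ GsC)) ∧
            (∀ i, 1 ≤ i → i ≤ n ^ (k - 1) * m ^ (k - 1) - 2 →
              FC i ⊆ (GH i \ GC i) ∪ (GsH \ GsC)) := by
  obtain ⟨r, rfl, hr⟩ : ∃ r, k = r + 1 ∧ 2 ≤ r := ⟨k - 1, by omega, by omega⟩
  have : NeZero r := ⟨by omega⟩
  obtain ⟨c, hc, hcard⟩ := exists_card_le_mul r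
  refine ⟨c, hc, 2, 1, two_pos, one_pos, fun n m hn hm => ?_⟩
  have : NeZero n := ⟨by omega⟩
  have : NeZero m := ⟨by omega⟩
  have hN : 0 < n ^ r * m ^ r := Nat.mul_pos (NeZero.pos (n ^ r)) (NeZero.pos (m ^ r))
  have hend := two_mul_add_le_endTime hr n m
  simp only [Nat.add_sub_cancel]
  refine ⟨_, _, _, inferInstance, inferInstance, inferInstance, inferInstance,
    spoilerGraph r n, duplicatorGraph r m, (hcard n m).1, (hcard n m).2,
    spoilerWins_empty hn (by omega), strategy r n m 0, {window r n m 0},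
    fun i => strategy r n m (2 * i - 1), fun i => {window r n m (2 * i - 1)},
    fun i => strategy r n m (2 * i), fun i => {window r n m (2 * i)},
    isCriticalStrategy_strategy hn (by omega),
    fun i _ _ => isCriticalStrategy_strategy hn (by omega),
    fun i _ _ => isCriticalStrategy_strategy hn (by omega),
    singleton_window_subset hn (by omega),
    fun i _ _ => (singleton_window_subset (i := 2 * i) hn (by omega)).trans Set.subset_union_left,
    fun i hi _ => ?_⟩
  obtain ⟨i, rfl⟩ := Nat.exists_eq_add_of_le' hi
  exact (singleton_window_subset (i := 2 * i + 1) hn (by omega)).trans Set.subset_union_left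
end
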